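/- arXiv:1202.0874 — 3 statements merged into one kernel-verified Lean document; each statement's English description precedes it below -/
import Mathlib

section
/- Σ over integers l, m, n ≥ 1 with l ≡ n (mod 2) of 1 / (l² m² n² (l+m)² (m+n)² (l+m+n)²) = 10411·π¹² / 1307674368000. -/
open Real

namespace SO6

/-- reciprocal with value 0 at 0 -/
noncomputable def g (n : ℤ) : ℝ := (n : ℝ)⁻¹

lemma bern2 : bernoulli 2 = 1 / 6 := by decide +kernel
lemma bern4 : bernoulli 4 = -1 / 30 := by decide +kernel
lemma bern6 : bernoulli 6 = 1 / 42 := by decide +kernel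
lemma bern8 : bernoulli 8 = -1 / 30 := by decide +kernel
lemma bern10 : bernoulli 10 = 5 / 66 := by decide +kernel
lemma bern12 : bernoulli 12 = -691 / 2730 := by decide +kernel

lemma hasSum_even (k : ℕ) (hk : k ≠ 0) : HasSum (fun n : ℤ => g n ^ (2 * k))
    (2 * ((-1) ^ (k + 1) * 2 ^ (2 * k - 1) * π ^ (2 * k) * bernoulli (2 * k) / (2 * k).factorial)) := by
  have h := hasSum_zeta_nat hk
  have h1 : HasSum (fun n : ℕ => g (n : ℤ) ^ (2 * k)) _ := h.congr_fun (by
    intro n; simp [g])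
  have h2 : HasSum (fun n : ℕ => g (-(n : ℤ)) ^ (2 * k)) _ := h.congr_fun (by
    intro n; simp [g, inv_neg, Even.neg_pow (even_two_mul k)])
  have := HasSum.of_nat_of_neg (f := fun n : ℤ => g n ^ (2 * k)) h1 h2
  convert! this using 1
  simp [g, hk]
  ring

lemma hP2 : HasSum (fun n : ℤ => g n ^ 2) (π ^ 2 / 3) := by
  convert hasSum_even 1 (by norm_num) using 1
  norm_num [bern2, Nat.factorial]; ring
lemma hP4 : HasSum (fun n : ℤ => g n ^ 4) (π ^ 4 / 45) := by
  convert hasSum_even 2 (by norm_num) using 1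
  norm_num [bern4, Nat.factorial]; ring
lemma hP6 : HasSum (fun n : ℤ => g n ^ 6) (2 * π ^ 6 / 945) := by
  convert hasSum_even 3 (by norm_num) using 1
  norm_num [bern6, Nat.factorial]; ring
lemma hP8 : HasSum (fun n : ℤ => g n ^ 8) (π ^ 8 / 4725) := by
  convert hasSum_even 4 (by norm_num) using 1
  norm_num [bern8, Nat.factorial]; ring
lemma hP10 : HasSum (fun n : ℤ => g n ^ 10) (2 * π ^ 10 / 93555) := by
  convert hasSum_even 5 (by norm_num) using 1
  norm_num [bern10, Nat.factorial]; ring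
lemma hP12 : HasSum (fun n : ℤ => g n ^ 12) (2 * 691 * π ^ 12 / 638512875) := by
  convert hasSum_even 6 (by norm_num) using 1
  norm_num [bern12, Nat.factorial]; ring

lemma hasSum_odd (j : ℕ) (hj : Odd j) (h2 : 2 ≤ j) : HasSum (fun n : ℤ => g n ^ j) 0 := by
  have h1 : HasSum (fun n : ℕ => g (n : ℤ) ^ j) (∑' n : ℕ, g (n : ℤ) ^ j) := by
    apply Summable.hasSum
    have := Real.summable_one_div_nat_pow.2 (show 1 < j by omega)
    exact this.congr (by intro n; simp [g])
  have h3 : HasSum (fun n : ℕ => g (-(n : ℤ)) ^ j) (-∑' n : ℕ, g (n : ℤ) ^ j) := h1.neg.congr_fun (by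
    intro n; simp [g, inv_neg, hj.neg_pow])
  have := HasSum.of_nat_of_neg (f := fun n : ℤ => g n ^ j) h1 h3
  convert! this using 1
  simp [g, show j ≠ 0 by omega]

lemma telN : HasSum (fun n : ℕ => (1 / ((n : ℝ) + 1) - 1 / ((n : ℝ) + 2))) 1 := by
  rw [hasSum_iff_tendsto_nat_of_nonneg]
  · have : ∀ n : ℕ, ∑ i ∈ Finset.range n, (1 / ((i : ℝ) + 1) - 1 / ((i : ℝ) + 2)) = 1 - 1 / ((n : ℝ) + 1) := by
      intro n
      induction n with
      | zero => simp
      | succ k ih => rw [Finset.sum_range_succ, ih]; push_cast; ring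
    simp_rw [this]
    simpa using (tendsto_one_div_add_atTop_nhds_zero_nat (𝕜 := ℝ)).const_sub 1
  · intro i
    have : 1 / ((i : ℝ) + 2) ≤ 1 / ((i : ℝ) + 1) := by gcongr; norm_num
    linarith

lemma tel1 : HasSum (fun n : ℤ => g n - g (n - 1)) 0 := by
  have a : HasSum (fun n : ℕ => g (n : ℤ) - g ((n : ℤ) - 1)) (1 + (1 - 1)) := by
    have a1 : HasSum (fun n : ℕ => g ((n + 1 : ℕ) : ℤ) - g (((n + 1 : ℕ) : ℤ) - 1)) (1 - 1) := by
      have : HasSum (fun n : ℕ => g (((n + 1) + 1 : ℕ) : ℤ) - g ((((n + 1) + 1 : ℕ) : ℤ) - 1)) (-1) := by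
        refine telN.neg.congr_fun ?_
        intro n; simp [g]
        ring_nf
      have := HasSum.zero_add (f := fun n : ℕ => g ((n + 1 : ℕ) : ℤ) - g (((n + 1 : ℕ) : ℤ) - 1)) this
      convert! this using 1
      simp [g]
    have := HasSum.zero_add (f := fun n : ℕ => g (n : ℤ) - g ((n : ℤ) - 1)) a1
    convert! this using 1
    simp [g]
  have b : HasSum (fun n : ℕ => g (-((n : ℤ) + 1)) - g (-((n : ℤ) + 1) - 1)) (-1) := by
    refine telN.neg.congr_fun ?_
    intro n
    simp only [g]; push_cast
    rw [show (-((n : ℝ) + 1) - 1) = -((n : ℝ) + 2) by ring, inv_neg, inv_neg]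
    simp only [one_div]; ring
  have := HasSum.of_nat_of_neg_add_one (f := fun n : ℤ => g n - g (n - 1)) a b
  simpa using this

lemma telNat (N : ℕ) : HasSum (fun n : ℤ => g n - g (n - N)) 0 := by
  induction N with
  | zero => simp
  | succ N ih =>
    have := (Equiv.subRight (N : ℤ)).hasSum_iff.2 tel1
    have h := ih.add this
    rw [add_zero] at h
    refine h.congr_fun ?_
    intro n
    simp [sub_sub]

lemma tel (x : ℤ) : HasSum (fun n : ℤ => g n - g (n - x)) 0 := by
  obtain ⟨N, rfl | rfl⟩ := x.eq_nat_or_neg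
  · exact telNat N
  · have := (Equiv.addRight (N : ℤ)).hasSum_iff.2 (telNat N)
    have h := this.neg
    rw [neg_zero] at h
    refine h.congr_fun ?_
    intro n; simp

lemma g_zero : g 0 = 0 := by simp [g]
lemma g_neg (n : ℤ) : g (-n) = -g n := by simp [g, inv_neg]

/-- `1/(x²-y²)` with value 0 when undefined -/
noncomputable def F (x y : ℤ) : ℝ := g (x - y) * g (x + y)

/-- indicator -/
noncomputable def I (x y : ℤ) : ℝ := (if y = x then 1 else 0) + (if y = -x then 1 else 0)

lemma hI (x : ℤ) : HasSum (I x) 2 := by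
  have := (hasSum_ite_eq x (1 : ℝ)).add (hasSum_ite_eq (-x) (1 : ℝ))
  convert! this using 1
  norm_num

lemma hT1 (x : ℤ) : HasSum (fun y => g (x - y) + g (x + y)) 0 := by
  have := (Equiv.subLeft x).hasSum_iff.2 (tel (2 * x))
  refine this.congr_fun ?_
  intro y
  simp only [Function.comp, Equiv.subLeft_apply]
  rw [show x - y - 2 * x = -(x + y) by ring, g_neg]; ring

lemma hT (x : ℤ) {j : ℕ} {P : ℝ} (h : HasSum (fun n : ℤ => g n ^ j) P) :
    HasSum (fun y => g (x - y) ^ j + g (x + y) ^ j) (2 * P) := by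
  have h1 := (Equiv.subLeft x).hasSum_iff.2 h
  have h2 := (Equiv.addLeft x).hasSum_iff.2 h
  convert! h1.add h2 using 1
  ring

lemma cases_F (x y : ℤ) (hx : x ≠ 0) :
    (g (x - y) = 0 ∧ g (x + y) = g (2 * x) ∧ I x y = 1) ∨
    (g (x - y) = g (2 * x) ∧ g (x + y) = 0 ∧ I x y = 1) ∨
    (I x y = 0 ∧ ∃ p q : ℝ, p ≠ 0 ∧ q ≠ 0 ∧ p + q ≠ 0 ∧ g (x - y) = 1 / p ∧ g (x + y) = 1 / q ∧
      g (2 * x) = 1 / (p + q)) := by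
  by_cases h1 : y = x
  · subst h1
    left
    refine ⟨by simp [g], by rw [two_mul], ?_⟩
    have : y ≠ -y := by omega
    simp [I, this]
  by_cases h2 : y = -x
  · subst h2
    right; left
    refine ⟨by rw [sub_neg_eq_add, two_mul], by simp [g], ?_⟩
    simp [I, h1]
  right; right
  refine ⟨by simp [I, h1, h2], (x : ℝ) - y, (x : ℝ) + y, ?_, ?_, ?_, ?_, ?_, ?_⟩
  · have : x - y ≠ 0 := by omega
    exact_mod_cast this
  · have : x + y ≠ 0 := by omega
    exact_mod_cast this
  · have : x - y + (x + y) ≠ 0 := by omega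
    exact_mod_cast this
  · simp [g]
  · simp [g]
  · simp only [g]; push_cast; rw [one_div]; congr 1; ring

lemma F1 (x y : ℤ) (hx : x ≠ 0) : F x y ^ 1 = g (2 * x) * (g (x - y) + g (x + y)) - g (2 * x) ^ 2 * I x y := by
  rcases cases_F x y hx with ⟨h1, h2, h3⟩ | ⟨h1, h2, h3⟩ | ⟨h3, p, q, hp, hq, hpq, h1, h2, h4⟩
  · simp only [F, h1, h2, h3]; ring
  · simp only [F, h1, h2, h3]; ring
  · simp only [F, h1, h2, h3, h4]; field_simp; ring

lemma F2 (x y : ℤ) (hx : x ≠ 0) : F x y ^ 2 = 2 * g (2 * x) ^ 3 * (g (x - y) + g (x + y))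
    + g (2 * x) ^ 2 * (g (x - y) ^ 2 + g (x + y) ^ 2) - 3 * g (2 * x) ^ 4 * I x y := by
  rcases cases_F x y hx with ⟨h1, h2, h3⟩ | ⟨h1, h2, h3⟩ | ⟨h3, p, q, hp, hq, hpq, h1, h2, h4⟩
  · simp only [F, h1, h2, h3]; ring
  · simp only [F, h1, h2, h3]; ring
  · simp only [F, h1, h2, h3, h4]; field_simp; ring

lemma F4 (x y : ℤ) (hx : x ≠ 0) : F x y ^ 4 = 20 * g (2 * x) ^ 7 * (g (x - y) + g (x + y))
    + 10 * g (2 * x) ^ 6 * (g (x - y) ^ 2 + g (x + y) ^ 2)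
    + 4 * g (2 * x) ^ 5 * (g (x - y) ^ 3 + g (x + y) ^ 3)
    + g (2 * x) ^ 4 * (g (x - y) ^ 4 + g (x + y) ^ 4) - 35 * g (2 * x) ^ 8 * I x y := by
  rcases cases_F x y hx with ⟨h1, h2, h3⟩ | ⟨h1, h2, h3⟩ | ⟨h3, p, q, hp, hq, hpq, h1, h2, h4⟩
  · simp only [F, h1, h2, h3]; ring
  · simp only [F, h1, h2, h3]; ring
  · simp only [F, h1, h2, h3, h4]; field_simp; ring

lemma F5 (x y : ℤ) (hx : x ≠ 0) : F x y ^ 5 = 70 * g (2 * x) ^ 9 * (g (x - y) + g (x + y))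
    + 35 * g (2 * x) ^ 8 * (g (x - y) ^ 2 + g (x + y) ^ 2)
    + 15 * g (2 * x) ^ 7 * (g (x - y) ^ 3 + g (x + y) ^ 3)
    + 5 * g (2 * x) ^ 6 * (g (x - y) ^ 4 + g (x + y) ^ 4)
    + g (2 * x) ^ 5 * (g (x - y) ^ 5 + g (x + y) ^ 5) - 126 * g (2 * x) ^ 10 * I x y := by
  rcases cases_F x y hx with ⟨h1, h2, h3⟩ | ⟨h1, h2, h3⟩ | ⟨h3, p, q, hp, hq, hpq, h1, h2, h4⟩
  · simp only [F, h1, h2, h3]; ring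
  · simp only [F, h1, h2, h3]; ring
  · simp only [F, h1, h2, h3, h4]; field_simp; ring

lemma F6 (x y : ℤ) (hx : x ≠ 0) : F x y ^ 6 = 252 * g (2 * x) ^ 11 * (g (x - y) + g (x + y))
    + 126 * g (2 * x) ^ 10 * (g (x - y) ^ 2 + g (x + y) ^ 2)
    + 56 * g (2 * x) ^ 9 * (g (x - y) ^ 3 + g (x + y) ^ 3)
    + 21 * g (2 * x) ^ 8 * (g (x - y) ^ 4 + g (x + y) ^ 4)
    + 6 * g (2 * x) ^ 7 * (g (x - y) ^ 5 + g (x + y) ^ 5)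
    + g (2 * x) ^ 6 * (g (x - y) ^ 6 + g (x + y) ^ 6) - 462 * g (2 * x) ^ 12 * I x y := by
  rcases cases_F x y hx with ⟨h1, h2, h3⟩ | ⟨h1, h2, h3⟩ | ⟨h3, p, q, hp, hq, hpq, h1, h2, h4⟩
  · simp only [F, h1, h2, h3]; ring
  · simp only [F, h1, h2, h3]; ring
  · simp only [F, h1, h2, h3, h4]; field_simp; ring

lemma hP3 : HasSum (fun n : ℤ => g n ^ 3) 0 := hasSum_odd 3 (by decide) (by norm_num)
lemma hP5 : HasSum (fun n : ℤ => g n ^ 5) 0 := hasSum_odd 5 (by decide) (by norm_num)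

lemma S1 (x : ℤ) (hx : x ≠ 0) : HasSum (fun y => F x y ^ 1) (-2 * g (2 * x) ^ 2) := by
  have h := ((hT1 x).mul_left (g (2 * x))).sub ((hI x).mul_left (g (2 * x) ^ 2))
  convert! h using 1
  · funext y; exact F1 x y hx
  · ring

lemma S2 (x : ℤ) (hx : x ≠ 0) : HasSum (fun y => F x y ^ 2)
    (2 * (π ^ 2 / 3) * g (2 * x) ^ 2 - 6 * g (2 * x) ^ 4) := by
  have h := (((hT1 x).mul_left (2 * g (2 * x) ^ 3)).add ((hT x hP2).mul_left (g (2 * x) ^ 2))).sub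
    ((hI x).mul_left (3 * g (2 * x) ^ 4))
  convert! h using 1
  · funext y; exact F2 x y hx
  · ring

lemma S4 (x : ℤ) (hx : x ≠ 0) : HasSum (fun y => F x y ^ 4)
    (20 * (π ^ 2 / 3) * g (2 * x) ^ 6 + 2 * (π ^ 4 / 45) * g (2 * x) ^ 4 - 70 * g (2 * x) ^ 8) := by
  have h := (((((hT1 x).mul_left (20 * g (2 * x) ^ 7)).add ((hT x hP2).mul_left (10 * g (2 * x) ^ 6))).add
    ((hT x hP3).mul_left (4 * g (2 * x) ^ 5))).add ((hT x hP4).mul_left (g (2 * x) ^ 4))).sub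
    ((hI x).mul_left (35 * g (2 * x) ^ 8))
  convert! h using 1
  · funext y; exact F4 x y hx
  · ring

lemma S5 (x : ℤ) (hx : x ≠ 0) : HasSum (fun y => F x y ^ 5)
    (70 * (π ^ 2 / 3) * g (2 * x) ^ 8 + 10 * (π ^ 4 / 45) * g (2 * x) ^ 6 - 252 * g (2 * x) ^ 10) := by
  have h := ((((((hT1 x).mul_left (70 * g (2 * x) ^ 9)).add ((hT x hP2).mul_left (35 * g (2 * x) ^ 8))).add
    ((hT x hP3).mul_left (15 * g (2 * x) ^ 7))).add ((hT x hP4).mul_left (5 * g (2 * x) ^ 6))).add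
    ((hT x hP5).mul_left (g (2 * x) ^ 5))).sub
    ((hI x).mul_left (126 * g (2 * x) ^ 10))
  convert! h using 1
  · funext y; exact F5 x y hx
  · ring

lemma S6 (x : ℤ) (hx : x ≠ 0) : HasSum (fun y => F x y ^ 6)
    (252 * (π ^ 2 / 3) * g (2 * x) ^ 10 + 42 * (π ^ 4 / 45) * g (2 * x) ^ 8
      + 2 * (2 * π ^ 6 / 945) * g (2 * x) ^ 6 - 924 * g (2 * x) ^ 12) := by
  have h := (((((((hT1 x).mul_left (252 * g (2 * x) ^ 11)).add
    ((hT x hP2).mul_left (126 * g (2 * x) ^ 10))).add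
    ((hT x hP3).mul_left (56 * g (2 * x) ^ 9))).add ((hT x hP4).mul_left (21 * g (2 * x) ^ 8))).add
    ((hT x hP5).mul_left (6 * g (2 * x) ^ 7))).add ((hT x hP6).mul_left (g (2 * x) ^ 6))).sub
    ((hI x).mul_left (462 * g (2 * x) ^ 12))
  convert! h using 1
  · funext y; exact F6 x y hx
  · ring

lemma S0 (k : ℕ) {P : ℝ} (h : HasSum (fun n : ℤ => g n ^ (2 * k)) P) :
    HasSum (fun y => F 0 y ^ k) ((-1) ^ k * P) := by
  refine (h.mul_left ((-1) ^ k)).congr_fun ?_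
  intro y
  simp only [F, zero_sub, zero_add, g_neg]
  rw [pow_mul, ← mul_pow]; congr 1; ring

/-- indicator of `y² = x²` -/
noncomputable def J (x y : ℤ) : ℝ := if y = x ∨ y = -x then 1 else 0

/-- half of the summand -/
noncomputable def h (x y z : ℤ) : ℝ :=
  F x z ^ 4 * F x y ^ 2 + 2 * (F x z ^ 5 * F x y ^ 1) - 3 * (F x z ^ 6 * J x y)

/-- the summand -/
noncomputable def f (x y z : ℤ) : ℝ := F x y ^ 2 * F y z ^ 2 * F x z ^ 2

lemma F_eq (x y : ℤ) : F x y = ((x : ℝ) ^ 2 - (y : ℝ) ^ 2)⁻¹ := by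
  simp only [F, g]; push_cast; rw [← mul_inv]; congr 1; ring

lemma J_eq (x y : ℤ) : J x y = if (x : ℝ) ^ 2 = (y : ℝ) ^ 2 then 1 else 0 := by
  unfold J
  congr 1
  rw [eq_comm (a := (x : ℝ) ^ 2), sq_eq_sq_iff_eq_or_eq_neg]
  norm_cast

lemma key (a b c : ℝ) :
    ((a - b)⁻¹ ^ 2 * (b - c)⁻¹ ^ 2 * (a - c)⁻¹ ^ 2 : ℝ) =
    ((a - c)⁻¹ ^ 4 * (a - b)⁻¹ ^ 2 + 2 * ((a - c)⁻¹ ^ 5 * (a - b)⁻¹ ^ 1)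
      - 3 * ((a - c)⁻¹ ^ 6 * if a = b then 1 else 0)) +
    ((c - a)⁻¹ ^ 4 * (c - b)⁻¹ ^ 2 + 2 * ((c - a)⁻¹ ^ 5 * (c - b)⁻¹ ^ 1)
      - 3 * ((c - a)⁻¹ ^ 6 * if c = b then 1 else 0)) := by
  rw [← neg_sub a c, inv_neg]
  by_cases hab : a = b
  · subst hab
    by_cases hca : c = a
    · subst hca; simp
    · rw [← neg_sub a c, inv_neg]
      generalize (a - c)⁻¹ = w
      simp [hca]; ring
  by_cases hcb : c = b
  · subst hcb
    generalize (a - c)⁻¹ = w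
    simp [hab]; ring
  by_cases hac : a = c
  · subst hac; simp
  have h1 : a - b ≠ 0 := sub_ne_zero.2 hab
  have h2 : c - b ≠ 0 := sub_ne_zero.2 hcb
  have h3 : a - c ≠ 0 := sub_ne_zero.2 hac
  simp only [hab, hcb, if_false]
  rw [← neg_sub c b, inv_neg]
  obtain ⟨p, hp⟩ : ∃ p, p = a - b := ⟨_, rfl⟩
  obtain ⟨q, hq⟩ : ∃ q, q = c - b := ⟨_, rfl⟩
  have e : a - c = p - q := by rw [hp, hq]; ring
  rw [e] at h3 ⊢
  rw [← hp] at h1 ⊢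
  rw [← hq] at h2 ⊢
  field_simp
  ring

lemma f_eq (x y z : ℤ) : f x y z = h x y z + h z y x := by
  simp only [f, h, F_eq, J_eq]
  exact key _ _ _

/-- dominating function -/
noncomputable def G (n : ℤ) : ℝ := g n ^ 2 + if n = 0 then 1 else 0

lemma G_nonneg (n : ℤ) : 0 ≤ G n := by
  unfold G; split_ifs <;> positivity

lemma G_summable : Summable G := hP2.summable.add (hasSum_ite_eq 0 (1 : ℝ)).summable

lemma g_abs (n : ℤ) : |g n| ≤ 1 := by
  by_cases hn : n = 0
  · simp [hn, g]
  · have : (1 : ℝ) ≤ |(n : ℝ)| := by exact_mod_cast Int.one_le_abs hn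
    rw [g, abs_inv]
    exact inv_le_one_of_one_le₀ this

lemma F_abs (x y : ℤ) : |F x y| ≤ 1 := by
  rw [F, abs_mul]
  exact mul_le_one₀ (g_abs _) (abs_nonneg _) (g_abs _)

lemma F_bd (x y : ℤ) : |F x y| ≤ G (x - y) + G (x + y) := by
  have h1 : |F x y| ≤ g (x - y) ^ 2 + g (x + y) ^ 2 := by
    rw [F, abs_mul]
    nlinarith [sq_nonneg (|g (x - y)| - |g (x + y)|), sq_abs (g (x - y)), sq_abs (g (x + y)),
      sq_nonneg (g (x - y)), sq_nonneg (g (x + y))]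
  have a1 : g (x - y) ^ 2 ≤ G (x - y) := by unfold G; split_ifs <;> simp
  have a2 : g (x + y) ^ 2 ≤ G (x + y) := by unfold G; split_ifs <;> simp
  linarith

lemma J_nonneg (x y : ℤ) : 0 ≤ J x y := by unfold J; split_ifs <;> norm_num

lemma J_bd (x y : ℤ) : J x y ≤ G (x - y) + G (x + y) := by
  have n1 := G_nonneg (x - y)
  have n2 := G_nonneg (x + y)
  unfold J
  split_ifs with hh
  · rcases hh with rfl | rfl
    · have : G (y - y) = 1 := by simp [G, g]
      linarith
    · have : G (x + -x) = 1 := by simp [G, g]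
      linarith
  · linarith

lemma h_bd (x y z : ℤ) : |h x y z| ≤ 6 * (F x z ^ 2 * (G (x - y) + G (x + y))) := by
  have hw := F_abs x z
  have hu := F_abs x y
  have b1 := F_bd x y
  have b2 := J_bd x y
  have b3 := J_nonneg x y
  unfold h
  set w := F x z
  set u := F x y
  set B := G (x - y) + G (x + y)
  have hB : 0 ≤ B := le_trans (abs_nonneg _) b1
  have hw2 : w ^ 2 ≤ 1 := by rw [← sq_abs]; exact pow_le_one₀ (abs_nonneg _) hw
  have c1 : |w ^ 4 * u ^ 2| ≤ w ^ 2 * B := by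
    rw [abs_of_nonneg (by positivity), show w ^ 4 * u ^ 2 = w ^ 2 * (w ^ 2 * u ^ 2) by ring]
    refine mul_le_mul_of_nonneg_left ?_ (sq_nonneg _)
    calc w ^ 2 * u ^ 2 ≤ 1 * u ^ 2 := by gcongr
      _ = |u| * |u| := by rw [one_mul, ← sq_abs]; ring
      _ ≤ 1 * |u| := by gcongr
      _ ≤ B := by linarith
  have c2 : |w ^ 5 * u ^ 1| ≤ w ^ 2 * B := by
    rw [abs_mul, abs_pow, pow_one, show |w| ^ 5 * |u| = w ^ 2 * (|w| ^ 3 * |u|) by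
      rw [← sq_abs w]; ring]
    refine mul_le_mul_of_nonneg_left ?_ (sq_nonneg _)
    calc |w| ^ 3 * |u| ≤ 1 * |u| := by
          gcongr; exact pow_le_one₀ (abs_nonneg _) hw
      _ ≤ B := by linarith
  have c3 : |w ^ 6 * J x y| ≤ w ^ 2 * B := by
    rw [abs_of_nonneg (by positivity), show w ^ 6 * J x y = w ^ 2 * ((w ^ 2) ^ 2 * J x y) by ring]
    refine mul_le_mul_of_nonneg_left ?_ (sq_nonneg _)
    calc (w ^ 2) ^ 2 * J x y ≤ 1 * J x y := by
          gcongr; exact pow_le_one₀ (sq_nonneg _) hw2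
      _ ≤ B := by linarith
  rw [abs_le] at *
  constructor <;> linarith [c1.1, c1.2, c2.1, c2.2, c3.1, c3.2]

lemma base_summable : Summable (fun t : ℤ × ℤ × ℤ => g t.1 ^ 2 * (g t.2.1 ^ 2 * G t.2.2)) := by
  have s := hP2.summable
  have a : Summable (fun t : ℤ × ℤ => g t.1 ^ 2 * G t.2) :=
    s.mul_of_nonneg G_summable (fun _ => sq_nonneg _) G_nonneg
  exact s.mul_of_nonneg a (fun _ => sq_nonneg _) (fun t => mul_nonneg (sq_nonneg _) (G_nonneg _))

lemma h_summable : Summable (fun t : ℤ × ℤ × ℤ => h t.1 t.2.1 t.2.2) := by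
  have s1 : Summable (fun t : ℤ × ℤ × ℤ => F t.1 t.2.2 ^ 2 * G (t.1 - t.2.1)) := by
    have := base_summable.comp_injective
      (i := fun t : ℤ × ℤ × ℤ => (t.1 - t.2.2, t.1 + t.2.2, t.1 - t.2.1)) (by
        rintro ⟨a, b, c⟩ ⟨a', b', c'⟩ e
        simp only [Prod.mk.injEq] at e ⊢
        omega)
    refine this.congr ?_
    intro t; simp only [Function.comp, F]; ring
  have s2 : Summable (fun t : ℤ × ℤ × ℤ => F t.1 t.2.2 ^ 2 * G (t.1 + t.2.1)) := by
    have := base_summable.comp_injective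
      (i := fun t : ℤ × ℤ × ℤ => (t.1 - t.2.2, t.1 + t.2.2, t.1 + t.2.1)) (by
        rintro ⟨a, b, c⟩ ⟨a', b', c'⟩ e
        simp only [Prod.mk.injEq] at e ⊢
        omega)
    refine this.congr ?_
    intro t; simp only [Function.comp, F]; ring
  refine Summable.of_norm_bounded ((s1.add s2).mul_left 6) ?_
  intro t
  rw [Real.norm_eq_abs]
  convert h_bd t.1 t.2.1 t.2.2 using 1
  ring

lemma hasSum_mul' {a b : ℤ → ℝ} {A B : ℝ} (ha : HasSum a A) (hb : HasSum b B) :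
    HasSum (fun t : ℤ × ℤ => a t.2 * b t.1) (A * B) := by
  have hs : Summable (fun t : ℤ × ℤ => b t.1 * a t.2) :=
    summable_mul_of_summable_norm hb.summable.norm ha.summable.norm
  have := hb.mul ha hs
  rw [mul_comm]
  refine this.congr_fun ?_
  intro t; ring

lemma hJ0 : HasSum (J 0) 1 := by
  refine (hasSum_ite_eq (0 : ℤ) (1 : ℝ)).congr_fun ?_
  intro y; simp [J]

lemma hJ (x : ℤ) (hx : x ≠ 0) : HasSum (J x) 2 := by
  refine (hI x).congr_fun ?_
  intro y
  unfold I J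
  by_cases h1 : y = x
  · have : y ≠ -x := by omega
    simp [h1, show x ≠ -x by omega]
  · simp [h1]

lemma fiber {x : ℤ} {s1 s2 s4 s5 s6 m : ℝ} (h1 : HasSum (fun y => F x y ^ 1) s1)
    (h2 : HasSum (fun y => F x y ^ 2) s2) (h4 : HasSum (fun y => F x y ^ 4) s4)
    (h5 : HasSum (fun y => F x y ^ 5) s5) (h6 : HasSum (fun y => F x y ^ 6) s6)
    (hm : HasSum (J x) m) :
    HasSum (fun t : ℤ × ℤ => h x t.1 t.2) (s4 * s2 + 2 * (s5 * s1) - 3 * (s6 * m)) :=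
  ((hasSum_mul' h4 h2).add ((hasSum_mul' h5 h1).mul_left 2)).sub ((hasSum_mul' h6 hm).mul_left 3)

/-- the fibre sums -/
noncomputable def V (x : ℤ) : ℝ := 
  ((20 * (π ^ 2 / 3) * g (2 * x) ^ 6 + 2 * (π ^ 4 / 45) * g (2 * x) ^ 4 - 70 * g (2 * x) ^ 8) *
    (2 * (π ^ 2 / 3) * g (2 * x) ^ 2 - 6 * g (2 * x) ^ 4)
  + 2 * ((70 * (π ^ 2 / 3) * g (2 * x) ^ 8 + 10 * (π ^ 4 / 45) * g (2 * x) ^ 6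
      - 252 * g (2 * x) ^ 10) * (-2 * g (2 * x) ^ 2))
  - 3 * ((252 * (π ^ 2 / 3) * g (2 * x) ^ 10 + 42 * (π ^ 4 / 45) * g (2 * x) ^ 8
      + 2 * (2 * π ^ 6 / 945) * g (2 * x) ^ 6 - 924 * g (2 * x) ^ 12) * 2))
  + if x = 0 then (π ^ 8 / 4725) * (π ^ 4 / 45) + 2 * ((2 * π ^ 10 / 93555) * (π ^ 2 / 3))
    - 3 * (2 * 691 * π ^ 12 / 638512875) else 0

lemma hV (x : ℤ) : HasSum (fun t : ℤ × ℤ => h x t.1 t.2) (V x) := by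
  by_cases hx : x = 0
  · subst hx
    convert! fiber (S0 1 hP2) (S0 2 hP4) (S0 4 hP8) (S0 5 hP10) (S0 6 hP12) hJ0 using 1
    simp [V, g_zero]
    ring
  · convert! fiber (S1 x hx) (S2 x hx) (S4 x hx) (S5 x hx) (S6 x hx) (hJ x hx) using 1
    simp only [V, hx, if_false]; ring

lemma hV_sum : HasSum V (12 * (10411 * π ^ 12 / 1307674368000)) := by
  have e : ∀ x, g (2 * x) = g x / 2 := by
    intro x; simp [g]; ring
  have q4 := hP4
  have := ((((hP6.mul_left (4 * (π ^ 6 / 135) / 2 ^ 6 - 12 * (2 * π ^ 6 / 945) / 2 ^ 6)).add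
    (hP8.mul_left ((40 * (π ^ 4 / 9) - 12 * (π ^ 4 / 45) - 40 * (π ^ 4 / 45)
      - 252 * (π ^ 4 / 45)) / 2 ^ 8))).add
    (hP10.mul_left ((-140 - 120 - 280 - 1512) * (π ^ 2 / 3) / 2 ^ 10))).add
    (hP12.mul_left ((420 + 1008 + 5544) / 2 ^ 12))).add
    (hasSum_ite_eq (0 : ℤ) ((π ^ 8 / 4725) * (π ^ 4 / 45) + 2 * ((2 * π ^ 10 / 93555) * (π ^ 2 / 3))
    - 3 * (2 * 691 * π ^ 12 / 638512875)))
  convert! this using 1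
  · funext x
    simp only [V, e]
    ring
  · ring

lemma h_tsum : HasSum (fun t : ℤ × ℤ × ℤ => h t.1 t.2.1 t.2.2)
    (12 * (10411 * π ^ 12 / 1307674368000)) := by
  have h1 := h_summable.hasSum
  have h2 := h1.prod_fiberwise (g := V) (fun x => hV x)
  rw [hV_sum.unique h2]
  exact h1

lemma f_hasSum : HasSum (fun t : ℤ × ℤ × ℤ => f t.1 t.2.1 t.2.2)
    (24 * (10411 * π ^ 12 / 1307674368000)) := by
  let e : ℤ × ℤ × ℤ ≃ ℤ × ℤ × ℤ :=
    ⟨fun t => (t.2.2, t.2.1, t.1), fun t => (t.2.2, t.2.1, t.1), fun _ => rfl, fun _ => rfl⟩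
  have h2 := e.hasSum_iff.2 h_tsum
  convert! h_tsum.add h2 using 1
  · funext t; exact f_eq _ _ _
  · ring

lemma F_swap (x y : ℤ) : F y x = -F x y := by
  rw [F_eq, F_eq, ← inv_neg, neg_sub]
lemma F_self (x : ℤ) : F x x = 0 := by simp [F_eq]
lemma F_neg_left (x y : ℤ) : F (-x) y = F x y := by simp [F_eq]
lemma F_neg_right (x y : ℤ) : F x (-y) = F x y := by simp [F_eq]

lemma F_natAbs {x y : ℤ} (hxy : x.natAbs = y.natAbs) : F x y = 0 := by
  rcases Int.natAbs_eq_natAbs_iff.1 hxy with rfl | rfl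
  · exact F_self _
  · rw [F_neg_left, F_self]

/-- restriction to `|x|>|y|>|z|` -/
noncomputable def E (t : ℤ × ℤ × ℤ) : ℝ :=
  if t.2.1.natAbs < t.1.natAbs ∧ t.2.2.natAbs < t.2.1.natAbs then f t.1 t.2.1 t.2.2 else 0

/-- restriction to `x>y>|z|` -/
noncomputable def D (t : ℤ × ℤ × ℤ) : ℝ :=
  if t.2.1 < t.1 ∧ (t.2.2.natAbs : ℤ) < t.2.1 then f t.1 t.2.1 t.2.2 else 0

lemma f12 (x y z : ℤ) : f y x z = f x y z := by simp only [f, F_swap x y]; ring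
lemma f23 (x y z : ℤ) : f x z y = f x y z := by simp only [f, F_swap y z]; ring
lemma fn1 (x y z : ℤ) : f (-x) y z = f x y z := by simp only [f, F_neg_left]
lemma fn2 (x y z : ℤ) : f x (-y) z = f x y z := by simp only [f, F_neg_left, F_neg_right]

lemma f_E (x y z : ℤ) : f x y z = E (x, y, z) + E (x, z, y) + E (y, x, z) + E (y, z, x)
    + E (z, x, y) + E (z, y, x) := by
  simp only [E]
  rw [f23 x y z, f12 x y z, show f y z x = f x y z by rw [f23, f12],
    show f z x y = f x y z by rw [f12, f23], show f z y x = f x y z by rw [f23, f12, f23]]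
  by_cases h1 : x.natAbs = y.natAbs
  · have : f x y z = 0 := by simp [f, F_natAbs h1]
    simp [this]
  by_cases h2 : x.natAbs = z.natAbs
  · have : f x y z = 0 := by simp [f, F_natAbs h2]
    simp [this]
  by_cases h3 : y.natAbs = z.natAbs
  · have : f x y z = 0 := by simp [f, F_natAbs h3]
    simp [this]
  generalize f x y z = c
  generalize x.natAbs = a at *
  generalize y.natAbs = b at *
  generalize z.natAbs = d at *
  split_ifs <;> first | omega | ring

lemma E_D (x y z : ℤ) : E (x, y, z) = D (x, y, z) + D (-x, y, z) + D (x, -y, z) + D (-x, -y, z) := by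
  simp only [E, D, fn1, fn2]
  generalize f x y z = c
  split_ifs <;> first | omega | ring

lemma f_nonneg (x y z : ℤ) : 0 ≤ f x y z := by unfold f; positivity

lemma D_summable : Summable D := by
  refine Summable.of_nonneg_of_le ?_ ?_ f_hasSum.summable
  · intro t; unfold D; split_ifs
    · exact f_nonneg _ _ _
    · exact le_rfl
  · intro t; unfold D; split_ifs
    · exact le_rfl
    · exact f_nonneg _ _ _

lemma E_hasSum : HasSum E (4 * ∑' t, D t) := by
  have h0 := D_summable.hasSum
  have h1 := ((Equiv.neg ℤ).prodCongr (Equiv.refl (ℤ × ℤ))).hasSum_iff.2 h0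
  have h2 := ((Equiv.refl ℤ).prodCongr ((Equiv.neg ℤ).prodCongr (Equiv.refl ℤ))).hasSum_iff.2 h0
  have h3 := ((Equiv.neg ℤ).prodCongr ((Equiv.neg ℤ).prodCongr (Equiv.refl ℤ))).hasSum_iff.2 h0
  convert! ((h0.add h1).add h2).add h3 using 1
  · funext ⟨x, y, z⟩; exact E_D x y z
  · ring

lemma f_hasSum' : HasSum (fun t : ℤ × ℤ × ℤ => f t.1 t.2.1 t.2.2) (24 * ∑' t, D t) := by
  have h0 := E_hasSum
  let e1 : ℤ × ℤ × ℤ ≃ ℤ × ℤ × ℤ :=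
    ⟨fun t => (t.1, t.2.2, t.2.1), fun t => (t.1, t.2.2, t.2.1), fun _ => rfl, fun _ => rfl⟩
  let e2 : ℤ × ℤ × ℤ ≃ ℤ × ℤ × ℤ :=
    ⟨fun t => (t.2.1, t.1, t.2.2), fun t => (t.2.1, t.1, t.2.2), fun _ => rfl, fun _ => rfl⟩
  let e3 : ℤ × ℤ × ℤ ≃ ℤ × ℤ × ℤ :=
    ⟨fun t => (t.2.1, t.2.2, t.1), fun t => (t.2.2, t.1, t.2.1), fun _ => rfl, fun _ => rfl⟩
  let e4 : ℤ × ℤ × ℤ ≃ ℤ × ℤ × ℤ :=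
    ⟨fun t => (t.2.2, t.1, t.2.1), fun t => (t.2.1, t.2.2, t.1), fun _ => rfl, fun _ => rfl⟩
  let e5 : ℤ × ℤ × ℤ ≃ ℤ × ℤ × ℤ :=
    ⟨fun t => (t.2.2, t.2.1, t.1), fun t => (t.2.2, t.2.1, t.1), fun _ => rfl, fun _ => rfl⟩
  convert! ((((h0.add (e1.hasSum_iff.2 h0)).add (e2.hasSum_iff.2 h0)).add (e3.hasSum_iff.2 h0)).add
    (e4.hasSum_iff.2 h0)).add (e5.hasSum_iff.2 h0) using 1
  · funext ⟨x, y, z⟩; exact f_E x y z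
  · ring

lemma D_val : ∑' t, D t = 10411 * π ^ 12 / 1307674368000 := by
  have := f_hasSum.unique f_hasSum'
  linarith

end SO6

/-- `ζ₃((2,2,2,2,2,2); SO(6)) = 10411 π¹² / 1307674368000`
(Equation (6.4) of Komori–Matsumoto–Tsumura). -/
theorem SO6_value_two :
    (∑' t : ℕ × ℕ × ℕ,
        if (t.1 + 1) % 2 = (t.2.2 + 1) % 2 then
          (1 : ℝ) /
            (((t.1 + 1 : ℕ) : ℝ) ^ 2 * ((t.2.1 + 1 : ℕ) : ℝ) ^ 2 *
              ((t.2.2 + 1 : ℕ) : ℝ) ^ 2 * ((t.1 + 1 + (t.2.1 + 1) : ℕ) : ℝ) ^ 2 *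
              ((t.2.1 + 1 + (t.2.2 + 1) : ℕ) : ℝ) ^ 2 *
              ((t.1 + 1 + (t.2.1 + 1) + (t.2.2 + 1) : ℕ) : ℝ) ^ 2)
        else 0) = 10411 * π ^ 12 / 1307674368000 := by
  rw [← SO6.D_val]
  have hsupp : ∀ t : Function.support SO6.D,
      t.1.2.1 < t.1.1 ∧ (t.1.2.2.natAbs : ℤ) < t.1.2.1 := by
    rintro ⟨t, ht⟩
    by_contra hc
    exact ht (if_neg hc)
  refine tsum_eq_tsum_of_ne_zero_bij
    (fun t => ((t.1.2.1 - t.1.2.2 - 1).toNat, (t.1.1 - t.1.2.1 - 1).toNat,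
      (t.1.2.1 + t.1.2.2 - 1).toNat)) ?_ ?_ ?_
  · rintro s t e
    have hs := hsupp s
    have ht := hsupp t
    obtain ⟨⟨a, b, c⟩, _⟩ := s
    obtain ⟨⟨a', b', c'⟩, _⟩ := t
    simp only [Prod.mk.injEq, Subtype.mk.injEq] at *
    omega
  · rintro ⟨l, m, n⟩ ht
    have hp : (l + 1) % 2 = (n + 1) % 2 := by
      by_contra hc
      exact ht (if_neg hc)
    obtain ⟨y, hy⟩ : ∃ y : ℤ, 2 * y = l + n + 2 := ⟨(l + n + 2) / 2, by omega⟩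
    have hcond : y < y + m + 1 ∧ (((y - l - 1).natAbs : ℕ) : ℤ) < y := by omega
    refine ⟨⟨(y + m + 1, y, y - l - 1), ?_⟩, ?_⟩
    · have e : SO6.D (y + m + 1, y, y - l - 1) = SO6.f (y + m + 1) y (y - l - 1) := if_pos hcond
      rw [Function.mem_support, e]
      simp only [SO6.f, SO6.F, SO6.g]
      have i1 : (((y + m + 1 - y : ℤ)) : ℝ) ≠ 0 := by
        exact_mod_cast (show y + m + 1 - y ≠ 0 by omega)
      have i2 : (((y + m + 1 + y : ℤ)) : ℝ) ≠ 0 := by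
        exact_mod_cast (show y + m + 1 + y ≠ 0 by omega)
      have i3 : (((y - (y - l - 1) : ℤ)) : ℝ) ≠ 0 := by
        exact_mod_cast (show y - (y - l - 1) ≠ 0 by omega)
      have i4 : (((y + (y - l - 1) : ℤ)) : ℝ) ≠ 0 := by
        exact_mod_cast (show y + (y - l - 1) ≠ 0 by omega)
      have i5 : (((y + m + 1 - (y - l - 1) : ℤ)) : ℝ) ≠ 0 := by
        exact_mod_cast (show y + m + 1 - (y - l - 1) ≠ 0 by omega)
      have i6 : (((y + m + 1 + (y - l - 1) : ℤ)) : ℝ) ≠ 0 := by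
        exact_mod_cast (show y + m + 1 + (y - l - 1) ≠ 0 by omega)
      positivity
    · simp only [Prod.mk.injEq]
      omega
  · intro t
    have ht := hsupp t
    obtain ⟨⟨x, y, z⟩, _⟩ := t
    simp only at ht ⊢
    have e : SO6.D (x, y, z) = SO6.f x y z := if_pos ht
    obtain ⟨l, hl⟩ : ∃ l : ℕ, (l : ℤ) = y - z - 1 := ⟨(y - z - 1).toNat, by omega⟩
    obtain ⟨m, hm⟩ : ∃ m : ℕ, (m : ℤ) = x - y - 1 := ⟨(x - y - 1).toNat, by omega⟩
    obtain ⟨n, hn⟩ : ∃ n : ℕ, (n : ℤ) = y + z - 1 := ⟨(y + z - 1).toNat, by omega⟩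
    rw [e, ← hl, ← hm, ← hn, Int.toNat_natCast, Int.toNat_natCast, Int.toNat_natCast,
      if_pos (by omega)]
    simp only [SO6.f, SO6.F, SO6.g]
    rw [show x - y = ((m + 1 : ℕ) : ℤ) by push_cast; omega,
      show x + y = ((l + 1 + (m + 1) + (n + 1) : ℕ) : ℤ) by push_cast; omega,
      show y - z = ((l + 1 : ℕ) : ℤ) by push_cast; omega,
      show y + z = ((n + 1 : ℕ) : ℤ) by push_cast; omega,
      show x - z = ((l + 1 + (m + 1) : ℕ) : ℤ) by push_cast; omega,
      show x + z = ((m + 1 + (n + 1) : ℕ) : ℤ) by push_cast; omega]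
    simp only [Int.cast_natCast]
    simp only [mul_pow, inv_pow, one_div, mul_inv]
    ring
end

section
/- Σ_{l,m,n ≥ 1} 1 / (l² m³ n³ (l+m)³ (m+n)³ (l+m+n)³) = (π⁶/63)·ζ(11) + (199π⁴/30)·ζ(13) − 365π²·ζ(15) + 2941·ζ(17). -/
open Complex Real

namespace A3

lemma hsc {ι : Type*} {f g : ι → ℝ} {a b : ℝ} (h : HasSum f a) (hfg : ∀ x, g x = f x)
    (hab : b = a) : HasSum g b := by
  rw [hab, show g = f from funext hfg]; exact h

noncomputable def Zk (k : ℕ) : ℝ := ∑' n : ℕ, (((n : ℝ) + 1) ^ k)⁻¹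

lemma hasSum_Zk (k : ℕ) (hk : 2 ≤ k) : HasSum (fun n : ℕ => (((n : ℝ) + 1) ^ k)⁻¹) (Zk k) := by
  have h : Summable (fun n : ℕ => ((n : ℝ) ^ k)⁻¹) := Real.summable_nat_pow_inv.2 (by omega)
  have := (summable_nat_add_iff 1).2 h
  refine Summable.hasSum ?_
  simpa using this

lemma hasSum_g (k : ℕ) (hk : 2 ≤ k) :
    HasSum (fun x : ℤ => ((x : ℝ)⁻¹) ^ k) (Zk k + (-1) ^ k * Zk k) := by
  have h1 := hasSum_Zk k hk
  have h2 : HasSum (fun n : ℕ => (((n : ℤ) : ℝ)⁻¹) ^ k) (Zk k) := by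
    rw [← hasSum_nat_add_iff' 1]
    simpa [show k ≠ 0 by omega] using h1
  have h3 : HasSum (fun n : ℕ => (((-((n : ℤ) + 1) : ℤ) : ℝ)⁻¹) ^ k) ((-1) ^ k * Zk k) := by
    refine hsc (h1.mul_left ((-1 : ℝ) ^ k)) (fun n => ?_) rfl
    push_cast
    rw [inv_neg, neg_pow, inv_pow]
  exact HasSum.of_nat_of_neg_add_one h2 h3

lemma hasSum_g_even (k : ℕ) (hk : 2 ≤ k) (he : Even k) :
    HasSum (fun x : ℤ => ((x : ℝ)⁻¹) ^ k) (2 * Zk k) := by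
  convert hasSum_g k hk using 1
  rw [he.neg_one_pow]; ring

lemma hasSum_g_odd (k : ℕ) (hk : 2 ≤ k) (he : Odd k) :
    HasSum (fun x : ℤ => ((x : ℝ)⁻¹) ^ k) 0 := by
  convert hasSum_g k hk using 1
  rw [he.neg_one_pow]; ring

lemma shift {g : ℤ → ℝ} {a : ℝ} (h : HasSum g a) (y : ℤ) : HasSum (fun x => g (x - y)) a :=
  (Equiv.subRight y).hasSum_iff.2 h

lemma tele1 : HasSum (fun x : ℤ => ((x : ℝ)⁻¹) - ((x - 1 : ℤ) : ℝ)⁻¹) 0 := by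
  have hs : Summable (fun n : ℕ => ((((n : ℤ) + 2 : ℤ) : ℝ)⁻¹ - ((((n : ℤ) + 2 : ℤ) - 1 : ℤ) : ℝ)⁻¹)) := by
    have h := (hasSum_Zk 2 le_rfl).summable
    refine Summable.of_norm_bounded h ?_
    intro n
    push_cast
    have : ((n : ℝ) + 2)⁻¹ - ((n : ℝ) + 2 - 1)⁻¹ = - (((n : ℝ) + 2) * ((n : ℝ) + 1))⁻¹ := by
      have : (n : ℝ) + 2 - 1 = n + 1 := by ring
      rw [this]; field_simp; ring
    rw [this, norm_neg, Real.norm_of_nonneg (by positivity)]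
    gcongr
    nlinarith [(Nat.cast_nonneg n : (0:ℝ) ≤ n)]
  have h1 : HasSum (fun n : ℕ => ((((n : ℤ)) : ℝ)⁻¹ - ((((n : ℤ)) - 1 : ℤ) : ℝ)⁻¹)) 1 := by
    have hs' : Summable (fun n : ℕ => ((((n : ℤ)) : ℝ)⁻¹ - ((((n : ℤ)) - 1 : ℤ) : ℝ)⁻¹)) := by
      rw [← summable_nat_add_iff 2]
      simpa using hs
    rw [hs'.hasSum_iff_tendsto_nat]
    have e : ∀ n : ℕ, ∑ i ∈ Finset.range n, ((((i : ℤ)) : ℝ)⁻¹ - ((((i : ℤ)) - 1 : ℤ) : ℝ)⁻¹)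
        = ((((n : ℤ)) - 1 : ℤ) : ℝ)⁻¹ + 1 := by
      intro n
      have := Finset.sum_range_sub (fun i : ℕ => ((((i : ℤ)) - 1 : ℤ) : ℝ)⁻¹) n
      simp only [Nat.cast_add, Nat.cast_one, add_sub_cancel_right] at this
      rw [this]
      norm_num
    simp only [e]
    have : Filter.Tendsto (fun n : ℕ => ((((n : ℤ)) - 1 : ℤ) : ℝ)⁻¹) Filter.atTop (nhds 0) := by
      refine Filter.Tendsto.inv_tendsto_atTop ?_
      push_cast
      exact Filter.tendsto_atTop_add_const_right _ (-1) tendsto_natCast_atTop_atTop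
    simpa using this.add_const 1
  have h2 : HasSum (fun n : ℕ => (((-((n : ℤ) + 1) : ℤ)) : ℝ)⁻¹ - (((-((n : ℤ) + 1) : ℤ) - 1 : ℤ) : ℝ)⁻¹) (-1) := by
    have : HasSum (fun n : ℕ => ((((n+2 : ℕ) : ℤ)) : ℝ)⁻¹ - ((((n+2 : ℕ) : ℤ) - 1 : ℤ) : ℝ)⁻¹) (1 - 2) := by
      refine hsc ((hasSum_nat_add_iff' 2).2 h1) (fun n => rfl) ?_
      norm_num [Finset.sum_range_succ]
    refine hsc this (fun n => ?_) (by norm_num)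
    · push_cast
      rw [show (-((n:ℝ) + 1)) = -((n:ℝ) + 2 - 1) by ring, show -((n:ℝ) + 2 - 1) - 1 = -((n:ℝ)+2) by ring,
        inv_neg, inv_neg]
      ring
  have h3 := HasSum.of_nat_of_neg_add_one
    (f := fun x : ℤ => ((x : ℝ)⁻¹) - ((x - 1 : ℤ) : ℝ)⁻¹) h1 h2
  exact hsc h3 (fun x => rfl) (by norm_num)

lemma teleNat (y : ℕ) : HasSum (fun x : ℤ => ((x : ℝ)⁻¹) - ((x - (y : ℤ) : ℤ) : ℝ)⁻¹) 0 := by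
  induction y with
  | zero => simp
  | succ k ih =>
    have := ih.add (shift tele1 k)
    refine hsc this (fun x => ?_) (by simp)
    push_cast; ring_nf

lemma tele (y : ℤ) : HasSum (fun x : ℤ => ((x : ℝ)⁻¹) - ((x - y : ℤ) : ℝ)⁻¹) 0 := by
  obtain ⟨n, rfl | rfl⟩ := y.eq_nat_or_neg
  · exact teleNat n
  · have := (shift (teleNat n) (-n)).neg
    refine hsc this (fun x => ?_) (by simp)
    push_cast; ring_nf

/-- polynomial part -/
noncomputable def Ep (q u v : ℝ) : ℝ :=
  u ^ 3 * v ^ 3 * (6 * q * (u + v) - (10 * u ^ 3 + 18 * u ^ 2 * v + 18 * u * v ^ 2 + 10 * v ^ 3))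

noncomputable def F (q y z : ℝ) : ℝ :=
  Ep q y⁻¹ z⁻¹ + Ep q (-y)⁻¹ (z - y)⁻¹ + Ep q (-z)⁻¹ (y - z)⁻¹

noncomputable def Kp (u v : ℝ) : ℝ :=
  u ^ 3 * v ^ 3 * (10 * u ^ 3 + 18 * u ^ 2 * v + 18 * u * v ^ 2 + 10 * v ^ 3)

noncomputable def pf (u v T : ℝ) : ℝ :=
  u ^ 3 * v ^ 3 * (T ^ 3 + 3 * (u + v) * T ^ 2 + (6 * u ^ 2 + 9 * u * v + 6 * v ^ 2) * T)

lemma pf_gen (x y z : ℝ) (hx : x ≠ 0) (hy : y ≠ 0) (hz : z ≠ 0) (hyz : z - y ≠ 0)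
    (hxy : x - y ≠ 0) (hxz : x - z ≠ 0) :
    (x ^ 3 * (x - y) ^ 3 * (x - z) ^ 3)⁻¹ =
      pf y⁻¹ z⁻¹ x⁻¹ + pf (-y)⁻¹ (z - y)⁻¹ (x - y)⁻¹ + pf (-z)⁻¹ (y - z)⁻¹ (x - z)⁻¹ := by
  have h1 : (y - z)⁻¹ = - (z - y)⁻¹ := by rw [← inv_neg]; congr 1; ring
  rw [h1, inv_neg, inv_neg]
  unfold pf
  field_simp
  ring

lemma pf_zero (y z : ℝ) (hy : y ≠ 0) (hz : z ≠ 0) (hyz : z - y ≠ 0) :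
    pf (-y)⁻¹ (z - y)⁻¹ (-y)⁻¹ + pf (-z)⁻¹ (y - z)⁻¹ (-z)⁻¹ = Kp y⁻¹ z⁻¹ := by
  have h1 : (y - z)⁻¹ = - (z - y)⁻¹ := by rw [← inv_neg]; congr 1; ring
  rw [h1, inv_neg, inv_neg]
  unfold pf Kp
  field_simp
  ring


lemma step1 (y z : ℤ) (hy : y ≠ 0) (hz : z ≠ 0) (hyz : z ≠ y) :
    HasSum (fun x : ℤ => ((x : ℝ) ^ 3 * ((x : ℝ) - y) ^ 3 * ((x : ℝ) - z) ^ 3)⁻¹) (F (Zk 2) y z) := by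
  have hy' : (y : ℝ) ≠ 0 := by exact_mod_cast hy
  have hz' : (z : ℝ) ≠ 0 := by exact_mod_cast hz
  have hyz' : (z : ℝ) - y ≠ 0 := by
    rw [sub_ne_zero]; exact_mod_cast hyz
  have hzy' : (y : ℝ) - z ≠ 0 := by
    rw [sub_ne_zero]; exact_mod_cast hyz.symm
  have g2 := hasSum_g_even 2 le_rfl (by decide)
  have g3 := hasSum_g_odd 3 (by norm_num) (by decide)
  set u : ℝ := (y : ℝ)⁻¹ with hu
  set v : ℝ := (z : ℝ)⁻¹ with hv
  set w : ℝ := ((z : ℝ) - y)⁻¹ with hw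
  have hu' : (-(y : ℝ))⁻¹ = -u := by rw [inv_neg]
  have hv' : (-(z : ℝ))⁻¹ = -v := by rw [inv_neg]
  have hw' : ((y : ℝ) - z)⁻¹ = -w := by rw [hw, ← inv_neg]; congr 1; ring
  have hc : u ^ 3 * v ^ 3 * (6 * u ^ 2 + 9 * u * v + 6 * v ^ 2) =
      - ((-u) ^ 3 * w ^ 3 * (6 * (-u) ^ 2 + 9 * (-u) * w + 6 * w ^ 2))
      - ((-v) ^ 3 * (-w) ^ 3 * (6 * (-v) ^ 2 + 9 * (-v) * (-w) + 6 * (-w) ^ 2)) := by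
    rw [hu, hv, hw]; field_simp; ring
  have e0 : HasSum (fun x : ℤ => u ^ 3 * v ^ 3 * ((x : ℝ)⁻¹ ^ 3 + 3 * (u + v) * (x : ℝ)⁻¹ ^ 2))
      (u ^ 3 * v ^ 3 * (0 + 3 * (u + v) * (2 * Zk 2))) :=
    (g3.add (g2.mul_left _)).mul_left _
  have e1 : HasSum (fun x : ℤ => (-u) ^ 3 * w ^ 3 * (((x - y : ℤ) : ℝ)⁻¹ ^ 3 + 3 * (-u + w) * ((x - y : ℤ) : ℝ)⁻¹ ^ 2))
      ((-u) ^ 3 * w ^ 3 * (0 + 3 * (-u + w) * (2 * Zk 2))) :=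
    ((shift g3 y).add ((shift g2 y).mul_left _)).mul_left _
  have e2 : HasSum (fun x : ℤ => (-v) ^ 3 * (-w) ^ 3 * (((x - z : ℤ) : ℝ)⁻¹ ^ 3 + 3 * (-v + -w) * ((x - z : ℤ) : ℝ)⁻¹ ^ 2))
      ((-v) ^ 3 * (-w) ^ 3 * (0 + 3 * (-v + -w) * (2 * Zk 2))) :=
    ((shift g3 z).add ((shift g2 z).mul_left _)).mul_left _
  have t1 := (tele y).mul_left (-((-u) ^ 3 * w ^ 3 * (6 * (-u) ^ 2 + 9 * (-u) * w + 6 * w ^ 2)))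
  have t2 := (tele z).mul_left (-((-v) ^ 3 * (-w) ^ 3 * (6 * (-v) ^ 2 + 9 * (-v) * (-w) + 6 * (-w) ^ 2)))
  have d0 := hasSum_ite_eq (0 : ℤ) (-Kp u v)
  have d1 := hasSum_ite_eq y (-Kp (-u) w)
  have d2 := hasSum_ite_eq z (-Kp (-v) (-w))
  refine hsc ((((((((e0.add e1).add e2).add t1).add t2).add d0).add d1).add d2)) ?_ ?_
  · intro x
    have key : ∀ X Y W : ℝ, X = (x : ℝ)⁻¹ → Y = ((x : ℝ) - y)⁻¹ → W = ((x : ℝ) - z)⁻¹ →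
        u ^ 3 * v ^ 3 * (X ^ 3 + 3 * (u + v) * X ^ 2) +
        (-u) ^ 3 * w ^ 3 * (Y ^ 3 + 3 * (-u + w) * Y ^ 2) +
        (-v) ^ 3 * (-w) ^ 3 * (W ^ 3 + 3 * (-v + -w) * W ^ 2) +
        (-((-u) ^ 3 * w ^ 3 * (6 * (-u) ^ 2 + 9 * (-u) * w + 6 * w ^ 2))) * (X - Y) +
        (-((-v) ^ 3 * (-w) ^ 3 * (6 * (-v) ^ 2 + 9 * (-v) * (-w) + 6 * (-w) ^ 2))) * (X - W)
        = pf u v X + pf (-u) w Y + pf (-v) (-w) W := by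
      intro X Y W _ _ _
      unfold pf
      linear_combination (-X) * hc
    simp only [Int.cast_sub]
    rw [key _ _ _ rfl rfl rfl]
    by_cases hx0 : x = 0
    · subst hx0
      have := pf_zero (y : ℝ) z hy' hz' hyz'
      rw [hu', hv', hw', ← hw, ← hu, ← hv] at this
      rw [if_pos rfl, if_neg hy.symm, if_neg hz.symm]
      simp only [Int.cast_zero, zero_sub, hu', hv']
      have h0 : pf u v (0 : ℝ)⁻¹ = 0 := by simp [pf]
      rw [h0]
      simp only [ne_eq, OfNat.ofNat_ne_zero, not_false_eq_true, zero_pow, zero_mul, inv_zero]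
      linarith
    by_cases hxy : x = y
    · subst hxy
      have := pf_zero (-(x : ℝ)) (z - x) (neg_ne_zero.2 hy') hyz' (by simpa using hz')
      simp only [neg_neg, neg_sub, sub_neg_eq_add, sub_add_cancel] at this
      rw [show (-(x : ℝ) - (z - x)) = -z by ring, hu', hv', hw', ← hw, ← hu, ← hv] at this
      rw [if_neg hx0, if_pos rfl, if_neg hyz.symm]
      have h0 : pf (-u) w ((x : ℝ) - x)⁻¹ = 0 := by simp [pf]
      rw [h0, ← hu, hw']
      have h1 : pf (-v) (-w) (-w) = pf (-w) (-v) (-w) := by unfold pf; ring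
      simp only [sub_self, ne_eq, OfNat.ofNat_ne_zero, not_false_eq_true, zero_pow, zero_mul, mul_zero, inv_zero]
      linarith
    by_cases hxz : x = z
    · subst hxz
      have := pf_zero (-(x : ℝ)) (y - x) (neg_ne_zero.2 hz') hzy' (by simpa using hy')
      simp only [neg_neg, neg_sub, sub_neg_eq_add, sub_add_cancel] at this
      rw [show (-(x : ℝ) - (y - x)) = -y by ring, hu', hv', hw', ← hw, ← hu, ← hv] at this
      rw [if_neg hx0, if_neg hxy, if_pos rfl]
      have h0 : pf (-v) (-w) ((x : ℝ) - x)⁻¹ = 0 := by simp [pf]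
      rw [h0, ← hv, ← hw]
      have h1 : pf (-u) w w = pf w (-u) w := by unfold pf; ring
      have h2 : pf v u v = pf u v v := by unfold pf; ring
      simp only [sub_self, ne_eq, OfNat.ofNat_ne_zero, not_false_eq_true, zero_pow, zero_mul, mul_zero, inv_zero]
      linarith
    · rw [if_neg hx0, if_neg hxy, if_neg hxz,
        pf_gen (x : ℝ) y z (by exact_mod_cast hx0) hy' hz' hyz'
          (by rw [sub_ne_zero]; exact_mod_cast hxy) (by rw [sub_ne_zero]; exact_mod_cast hxz)]
      rw [hu', hv', hw']
      simp only [add_zero]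
      rfl
  · unfold F
    rw [hu', hv', hw', ← hw, ← hu, ← hv]
    unfold Ep Kp
    ring

noncomputable def H (q y z : ℝ) : ℝ := F q y z * (z ^ 3 * y ^ 2 * (y - z) ^ 3)⁻¹

noncomputable def PY (q v Y : ℝ) : ℝ :=
  (1566 * v ^ 16 - 390 * q * v ^ 14) * Y ^ 1 + (1566 * v ^ 15 - 390 * q * v ^ 13) * Y ^ 2 + (1170 * v ^ 14 - 264 * q * v ^ 12) * Y ^ 3 + (774 * v ^ 13 - 138 * q * v ^ 11) * Y ^ 4 + (462 * v ^ 12 - 54 * q * v ^ 10) * Y ^ 5 + (234 * v ^ 11 - 12 * q * v ^ 9) * Y ^ 6 + (90 * v ^ 10) * Y ^ 7 + (20 * v ^ 9) * Y ^ 8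

noncomputable def PW (q v W : ℝ) : ℝ :=
  (-1566 * v ^ 16 + 390 * q * v ^ 14) * W ^ 1 + (396 * v ^ 14 - 126 * q * v ^ 12) * W ^ 3 + (-396 * v ^ 13 + 126 * q * v ^ 11) * W ^ 4 + (312 * v ^ 12 - 84 * q * v ^ 10) * W ^ 5 + (-228 * v ^ 11 + 42 * q * v ^ 9) * W ^ 6 + (144 * v ^ 10 - 12 * q * v ^ 8) * W ^ 7 + (-70 * v ^ 9) * W ^ 8 + (20 * v ^ 8) * W ^ 9

lemma H_gen (q y z : ℝ) (hy : y ≠ 0) (hz : z ≠ 0) (hyz : y - z ≠ 0) :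
    H q y z = PY q z⁻¹ y⁻¹ + PW q z⁻¹ (y - z)⁻¹ := by
  have h1 : (z - y)⁻¹ = - (y - z)⁻¹ := by rw [← inv_neg]; congr 1; ring
  unfold H F
  rw [h1, inv_neg, inv_neg]
  unfold Ep PY PW
  field_simp
  ring

lemma step2 (z : ℤ) (hz : z ≠ 0) :
    HasSum (fun y : ℤ => H (Zk 2) y z)
     (-5882 * (z : ℝ)⁻¹ ^ 17 + (1248 * Zk 2 + 2 * 1566 * Zk 2) * (z : ℝ)⁻¹ ^ 15
      + (756 * Zk 4 - 780 * Zk 2 * Zk 2) * (z : ℝ)⁻¹ ^ 13 + (12 * Zk 6 - 24 * Zk 2 * Zk 4) * (z : ℝ)⁻¹ ^ 11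
      + (60 * Zk 2 * Zk 6 - 100 * Zk 8) * (z : ℝ)⁻¹ ^ 9) := by
  have hz' : (z : ℝ) ≠ 0 := by exact_mod_cast hz
  set q := Zk 2 with hq
  set v : ℝ := (z : ℝ)⁻¹ with hv
  have g2 := hasSum_g_even 2 (by norm_num) (by decide)
  have g3 := hasSum_g_odd 3 (by norm_num) (by decide)
  have g4 := hasSum_g_even 4 (by norm_num) (by decide)
  have g5 := hasSum_g_odd 5 (by norm_num) (by decide)
  have g6 := hasSum_g_even 6 (by norm_num) (by decide)
  have g7 := hasSum_g_odd 7 (by norm_num) (by decide)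
  have g8 := hasSum_g_even 8 (by norm_num) (by decide)
  have g9 := hasSum_g_odd 9 (by norm_num) (by decide)
  have t := (tele z).mul_left (1566 * v ^ 16 - 390 * q * v ^ 14)
  have eY : HasSum (fun x : ℤ => (1566 * v ^ 15 - 390 * q * v ^ 13) * (x : ℝ)⁻¹ ^ 2 + (1170 * v ^ 14 - 264 * q * v ^ 12) * (x : ℝ)⁻¹ ^ 3 + (774 * v ^ 13 - 138 * q * v ^ 11) * (x : ℝ)⁻¹ ^ 4 + (462 * v ^ 12 - 54 * q * v ^ 10) * (x : ℝ)⁻¹ ^ 5 + (234 * v ^ 11 - 12 * q * v ^ 9) * (x : ℝ)⁻¹ ^ 6 + (90 * v ^ 10) * (x : ℝ)⁻¹ ^ 7 + (20 * v ^ 9) * (x : ℝ)⁻¹ ^ 8)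
      ((1566 * v ^ 15 - 390 * q * v ^ 13) * (2 * Zk 2) + (1170 * v ^ 14 - 264 * q * v ^ 12) * 0 + (774 * v ^ 13 - 138 * q * v ^ 11) * (2 * Zk 4) + (462 * v ^ 12 - 54 * q * v ^ 10) * 0 + (234 * v ^ 11 - 12 * q * v ^ 9) * (2 * Zk 6) + (90 * v ^ 10) * 0 + (20 * v ^ 9) * (2 * Zk 8)) :=
    (((((((g2.mul_left _).add (g3.mul_left _)).add (g4.mul_left _)).add (g5.mul_left _)).add (g6.mul_left _)).add (g7.mul_left _)).add (g8.mul_left _))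
  have eW : HasSum (fun x : ℤ => (396 * v ^ 14 - 126 * q * v ^ 12) * ((x - z : ℤ) : ℝ)⁻¹ ^ 3 + (-396 * v ^ 13 + 126 * q * v ^ 11) * ((x - z : ℤ) : ℝ)⁻¹ ^ 4 + (312 * v ^ 12 - 84 * q * v ^ 10) * ((x - z : ℤ) : ℝ)⁻¹ ^ 5 + (-228 * v ^ 11 + 42 * q * v ^ 9) * ((x - z : ℤ) : ℝ)⁻¹ ^ 6 + (144 * v ^ 10 - 12 * q * v ^ 8) * ((x - z : ℤ) : ℝ)⁻¹ ^ 7 + (-70 * v ^ 9) * ((x - z : ℤ) : ℝ)⁻¹ ^ 8 + (20 * v ^ 8) * ((x - z : ℤ) : ℝ)⁻¹ ^ 9)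
      ((396 * v ^ 14 - 126 * q * v ^ 12) * 0 + (-396 * v ^ 13 + 126 * q * v ^ 11) * (2 * Zk 4) + (312 * v ^ 12 - 84 * q * v ^ 10) * 0 + (-228 * v ^ 11 + 42 * q * v ^ 9) * (2 * Zk 6) + (144 * v ^ 10 - 12 * q * v ^ 8) * 0 + (-70 * v ^ 9) * (2 * Zk 8) + (20 * v ^ 8) * 0) :=
    ((((((((shift g3 z).mul_left _).add ((shift g4 z).mul_left _)).add ((shift g5 z).mul_left _)).add ((shift g6 z).mul_left _)).add ((shift g7 z).mul_left _)).add ((shift g8 z).mul_left _)).add ((shift g9 z).mul_left _))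
  have d0 := hasSum_ite_eq (0 : ℤ) (-PW q v (-v))
  have d1 := hasSum_ite_eq z (-PY q v v)
  refine hsc ((((t.add eY).add eW).add d0).add d1) ?_ ?_
  · intro y
    have key : ∀ Y W : ℝ, Y = (y : ℝ)⁻¹ → W = ((y : ℝ) - z)⁻¹ →
        (1566 * v ^ 16 - 390 * q * v ^ 14) * (Y - W) + ((1566 * v ^ 15 - 390 * q * v ^ 13) * Y ^ 2 + (1170 * v ^ 14 - 264 * q * v ^ 12) * Y ^ 3 + (774 * v ^ 13 - 138 * q * v ^ 11) * Y ^ 4 + (462 * v ^ 12 - 54 * q * v ^ 10) * Y ^ 5 + (234 * v ^ 11 - 12 * q * v ^ 9) * Y ^ 6 + (90 * v ^ 10) * Y ^ 7 + (20 * v ^ 9) * Y ^ 8) + ((396 * v ^ 14 - 126 * q * v ^ 12) * W ^ 3 + (-396 * v ^ 13 + 126 * q * v ^ 11) * W ^ 4 + (312 * v ^ 12 - 84 * q * v ^ 10) * W ^ 5 + (-228 * v ^ 11 + 42 * q * v ^ 9) * W ^ 6 + (144 * v ^ 10 - 12 * q * v ^ 8) * W ^ 7 + (-70 * v ^ 9)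 * W ^ 8 + (20 * v ^ 8) * W ^ 9) = PY q v Y + PW q v W := by
      intro Y W _ _
      unfold PY PW
      ring
    simp only [Int.cast_sub]
    rw [key _ _ rfl rfl]
    by_cases hy0 : y = 0
    · subst hy0
      rw [if_pos rfl, if_neg hz.symm]
      simp [H, PY, inv_neg, ← hv]
    by_cases hyz : y = z
    · subst hyz
      rw [if_neg hy0, if_pos rfl, ← hv]
      simp [H, PW]
    · rw [if_neg hy0, if_neg hyz, H_gen q y z (by exact_mod_cast hy0) hz'
        (by rw [sub_ne_zero]; exact_mod_cast hyz)]
      simp [← hv]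
  · unfold PW PY
    ring



lemma region {ι κ : Type*} {f : κ → ℝ} {a : ℝ} (e : ι → κ) (P : κ → Prop) [DecidablePred P]
    (hP : ∀ i, P (e i)) (hr : ∀ k, P k → ∃ i, e i = k) (inj : Function.Injective e)
    (h : HasSum (fun i => f (e i)) a) : HasSum (fun k => if P k then f k else 0) a := by
  rw [← inj.hasSum_iff]
  · refine hsc h (fun i => ?_) rfl
    simp [hP i]
  · intro k hk
    rw [if_neg]
    intro hp
    exact hk (hr k hp)

noncomputable def sA (l m n : ℝ) : ℝ :=
  (l ^ 2 * m ^ 3 * n ^ 3 * (l + m) ^ 3 * (m + n) ^ 3 * (l + m + n) ^ 3)⁻¹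
noncomputable def sB (l m n : ℝ) : ℝ :=
  (l ^ 3 * m ^ 2 * n ^ 3 * (l + m) ^ 3 * (m + n) ^ 3 * (l + m + n) ^ 3)⁻¹
noncomputable def sC (l m n : ℝ) : ℝ :=
  (l ^ 3 * m ^ 3 * n ^ 3 * (l + m) ^ 2 * (m + n) ^ 3 * (l + m + n) ^ 3)⁻¹

lemma sC_eq (l m n : ℝ) (hl : 0 < l) (hm : 0 < m) (hn : 0 < n) : sC l m n = sA l m n + sB l m n := by
  unfold sA sB sC
  have h1 : l + m ≠ 0 := by positivity
  have h2 : m + n ≠ 0 := by positivity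
  have h3 : l + m + n ≠ 0 := by positivity
  field_simp

lemma summable2 : Summable (fun t : ℕ × ℕ => (((t.1 : ℝ) + 1) ^ 2)⁻¹ * (((t.2 : ℝ) + 1) ^ 2)⁻¹) := by
  have h := (hasSum_Zk 2 le_rfl).summable
  exact h.mul_of_nonneg h (fun _ => by positivity) (fun _ => by positivity)

lemma summable3 : Summable (fun t : ℕ × ℕ × ℕ => (((t.1 : ℝ) + 1) ^ 2)⁻¹ *
    ((((t.2.1 : ℝ) + 1) ^ 2)⁻¹ * (((t.2.2 : ℝ) + 1) ^ 2)⁻¹)) := by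
  have h := (hasSum_Zk 2 le_rfl).summable
  exact h.mul_of_nonneg summable2 (fun _ => by positivity) (fun _ => by positivity)

lemma bnd (l m n : ℝ) (hl : 1 ≤ l) (hm : 1 ≤ m) (hn : 1 ≤ n) (a b : ℕ) (ha : 2 ≤ a) (hb : 2 ≤ b) :
    (l ^ a * m ^ b * n ^ 3 * (l + m) ^ 3 * (m + n) ^ 3 * (l + m + n) ^ 3)⁻¹ ≤
      (l ^ 2)⁻¹ * ((m ^ 2)⁻¹ * (n ^ 2)⁻¹) := by
  rw [← mul_inv, ← mul_inv]
  have h1 : 1 ≤ (l + m) ^ 3 := one_le_pow₀ (by linarith)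
  have h2 : 1 ≤ (m + n) ^ 3 := one_le_pow₀ (by linarith)
  have h3 : 1 ≤ (l + m + n) ^ 3 := one_le_pow₀ (by linarith)
  apply inv_anti₀ (by positivity)
  calc l ^ 2 * (m ^ 2 * n ^ 2) = l ^ 2 * m ^ 2 * n ^ 2 * 1 * 1 * 1 := by ring
    _ ≤ l ^ a * m ^ b * n ^ 3 * (l + m) ^ 3 * (m + n) ^ 3 * (l + m + n) ^ 3 := by
      gcongr
      norm_num

lemma summable_A : Summable (fun t : ℕ × ℕ × ℕ => sA ((t.1 : ℝ) + 1) ((t.2.1 : ℝ) + 1) ((t.2.2 : ℝ) + 1)) := by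
  refine Summable.of_nonneg_of_le (fun t => ?_) (fun t => ?_) summable3
  · unfold sA; positivity
  · exact bnd _ _ _ (by simp) (by simp) (by simp) 2 3 (by norm_num) (by norm_num)

lemma summable_B : Summable (fun t : ℕ × ℕ × ℕ => sB ((t.1 : ℝ) + 1) ((t.2.1 : ℝ) + 1) ((t.2.2 : ℝ) + 1)) := by
  refine Summable.of_nonneg_of_le (fun t => ?_) (fun t => ?_) summable3
  · unfold sB; positivity
  · exact bnd _ _ _ (by simp) (by simp) (by simp) 3 2 (by norm_num) (by norm_num)

noncomputable def Aval : ℝ :=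
  ∑' t : ℕ × ℕ × ℕ, sA ((t.1 : ℝ) + 1) ((t.2.1 : ℝ) + 1) ((t.2.2 : ℝ) + 1)

lemma ps1 (M N L : ℝ) : (M ^ 2 * N ^ 3 * (M + N) ^ 3)⁻¹ *
    ((M + N + L) ^ 3 * (M + N + L - M) ^ 3 * (M + N + L - (M + N)) ^ 3)⁻¹ = sA M N L := by
  rw [show M + N + L - M = N + L by ring, show M + N + L - (M + N) = L by ring, sA, ← mul_inv]
  congr 1; ring

lemma ps2 (M P Q : ℝ) : (M ^ 2 * (P + Q) ^ 3 * (M + (P + Q)) ^ 3)⁻¹ *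
    ((M + P) ^ 3 * (M + P - M) ^ 3 * (M + P - (M + (P + Q))) ^ 3)⁻¹ = - sA M P Q := by
  rw [show M + P - M = P by ring, show M + P - (M + (P + Q)) = -Q by ring, sA, ← mul_inv, ← inv_neg,
    ← add_assoc]
  congr 1; ring

lemma ps3 (P Q N : ℝ) : ((P + Q) ^ 2 * N ^ 3 * (P + Q + N) ^ 3)⁻¹ *
    (P ^ 3 * (P - (P + Q)) ^ 3 * (P - (P + Q + N)) ^ 3)⁻¹ = sC P Q N := by
  rw [show P - (P + Q) = -Q by ring, show P - (P + Q + N) = -(Q + N) by ring, sC, ← mul_inv]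
  congr 1; ring

lemma ps4 (P M N : ℝ) : (M ^ 2 * N ^ 3 * (M + N) ^ 3)⁻¹ *
    ((-P) ^ 3 * (-P - M) ^ 3 * (-P - (M + N)) ^ 3)⁻¹ = - sB P M N := by
  rw [show -P - M = -(P + M) by ring, show -P - (M + N) = -(P + M + N) by ring, sB, ← mul_inv, ← inv_neg]
  congr 1; ring

noncomputable def Psi (k : (ℕ × ℕ) × ℤ) : ℝ :=
  ((((k.1.1 : ℝ) + 1) ^ 2 * ((k.1.2 : ℝ) + 1) ^ 3 * ((k.1.1 : ℝ) + 1 + (k.1.2 + 1)) ^ 3)⁻¹) *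
  ((k.2 : ℝ) ^ 3 * ((k.2 : ℝ) - (((k.1.1 : ℤ) + 1 : ℤ) : ℝ)) ^ 3 *
    ((k.2 : ℝ) - (((k.1.1 : ℤ) + 1 + (k.1.2 + 1) : ℤ) : ℝ)) ^ 3)⁻¹

lemma hasSum_Psi : HasSum Psi Aval := by
  have hA : HasSum (fun t : ℕ × ℕ × ℕ => sA ((t.1 : ℝ) + 1) ((t.2.1 : ℝ) + 1) ((t.2.2 : ℝ) + 1)) Aval :=
    summable_A.hasSum
  obtain ⟨b, hB⟩ := summable_B
  have hC : HasSum (fun t : ℕ × ℕ × ℕ => sC ((t.1 : ℝ) + 1) ((t.2.1 : ℝ) + 1) ((t.2.2 : ℝ) + 1)) (Aval + b) :=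
    hsc (hA.add hB) (fun t => sC_eq _ _ _ (by positivity) (by positivity) (by positivity)) rfl
  have r1 : HasSum (fun k : (ℕ × ℕ) × ℤ => if (k.1.1 : ℤ) + 1 + (k.1.2 + 1) < k.2 then Psi k else 0) Aval := by
    refine region (fun t : ℕ × ℕ × ℕ => ((t.1, t.2.1), (t.1 : ℤ) + 1 + (t.2.1 + 1) + (t.2.2 + 1)))
      _ ?_ ?_ ?_ (hsc hA ?_ rfl)
    · rintro ⟨a, b, c⟩; simp only; omega
    · rintro ⟨⟨m, n⟩, x⟩ h
      simp only at h
      refine ⟨⟨m, n, (x - (m + n + 3)).toNat⟩, ?_⟩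
      simp only [Prod.mk.injEq, true_and]
      omega
    · rintro ⟨a, b, c⟩ ⟨a', b', c'⟩ h
      simp only [Prod.mk.injEq] at h ⊢
      omega
    · rintro ⟨a, b, c⟩
      rw [← ps1]
      simp only [Psi]
      push_cast
      rfl
  have r2 : HasSum (fun k : (ℕ × ℕ) × ℤ => if (k.1.1 : ℤ) + 1 < k.2 ∧ k.2 < (k.1.1 : ℤ) + 1 + (k.1.2 + 1)
      then Psi k else 0) (-Aval) := by
    refine region (fun t : ℕ × ℕ × ℕ => ((t.1, t.2.1 + t.2.2 + 1), (t.1 : ℤ) + 1 + (t.2.1 + 1)))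
      _ ?_ ?_ ?_ (hsc hA.neg ?_ rfl)
    · rintro ⟨a, b, c⟩; simp only; push_cast; omega
    · rintro ⟨⟨m, n⟩, x⟩ h
      simp only at h
      refine ⟨⟨m, (x - (m + 2)).toNat, (m + n + 1 - x).toNat⟩, ?_⟩
      simp only [Prod.mk.injEq, true_and]
      omega
    · rintro ⟨a, b, c⟩ ⟨a', b', c'⟩ h
      simp only [Prod.mk.injEq] at h ⊢
      omega
    · rintro ⟨a, b, c⟩
      rw [← ps2, show ((b : ℝ) + 1 + (c + 1)) = b + c + 1 + 1 by ring]
      simp only [Psi]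
      push_cast
      rfl
  have r3 : HasSum (fun k : (ℕ × ℕ) × ℤ => if 0 < k.2 ∧ k.2 < (k.1.1 : ℤ) + 1
      then Psi k else 0) (Aval + b) := by
    refine region (fun t : ℕ × ℕ × ℕ => ((t.1 + t.2.1 + 1, t.2.2), (t.1 : ℤ) + 1))
      _ ?_ ?_ ?_ (hsc hC ?_ rfl)
    · rintro ⟨a, b, c⟩; simp only; push_cast; omega
    · rintro ⟨⟨m, n⟩, x⟩ h
      simp only at h
      refine ⟨⟨(x - 1).toNat, (m - x).toNat, n⟩, Prod.ext (Prod.ext ?_ rfl) ?_⟩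
      · change (x - 1).toNat + (m - x).toNat + 1 = m
        omega
      · change ((x - 1).toNat : ℤ) + 1 = x
        omega
    · rintro ⟨a, b, c⟩ ⟨a', b', c'⟩ h
      simp only [Prod.mk.injEq] at h ⊢
      omega
    · rintro ⟨a, b, c⟩
      rw [← ps3, show ((a : ℝ) + 1 + (b + 1)) = a + b + 1 + 1 by ring]
      simp only [Psi]
      push_cast
      rfl
  have r4 : HasSum (fun k : (ℕ × ℕ) × ℤ => if k.2 < 0 then Psi k else 0) (-b) := by
    refine region (fun t : ℕ × ℕ × ℕ => ((t.2.1, t.2.2), -((t.1 : ℤ) + 1)))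
      _ ?_ ?_ ?_ (hsc hB.neg ?_ rfl)
    · rintro ⟨a, b, c⟩; simp only; omega
    · rintro ⟨⟨m, n⟩, x⟩ h
      simp only at h
      refine ⟨⟨(-x - 1).toNat, m, n⟩, ?_⟩
      simp only [Prod.mk.injEq, true_and]
      omega
    · rintro ⟨a, b, c⟩ ⟨a', b', c'⟩ h
      simp only [Prod.mk.injEq] at h ⊢
      omega
    · rintro ⟨a, b, c⟩
      rw [← ps4]
      simp only [Psi]
      push_cast
      rfl
  refine hsc (((r1.add r2).add r3).add r4) ?_ (by ring)
  rintro ⟨⟨m, n⟩, x⟩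
  simp only
  by_cases h0 : x = 0 ∨ x = (m : ℤ) + 1 ∨ x = (m : ℤ) + 1 + (n + 1)
  · have : Psi ((m, n), x) = 0 := by
      unfold Psi
      rcases h0 with h | h | h <;> simp [h]
    simp [this]
  · push Not at h0
    obtain ⟨h0, h1, h2⟩ := h0
    generalize Psi ((m, n), x) = p
    split_ifs <;> first | omega | simp

lemma hasSum_P : HasSum (fun t : ℕ × ℕ => -H (Zk 2) ((t.1 : ℝ) + 1) ((t.1 : ℝ) + 1 + (t.2 + 1))) Aval := by
  refine hasSum_Psi.prod_fiberwise (fun t => ?_)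
  have := step1 ((t.1 : ℤ) + 1) ((t.1 : ℤ) + 1 + (t.2 + 1)) (by omega) (by omega) (by omega)
  refine hsc (this.mul_left ((((t.1 : ℝ) + 1) ^ 2 * ((t.2 : ℝ) + 1) ^ 3 *
    ((t.1 : ℝ) + 1 + (t.2 + 1)) ^ 3)⁻¹)) (fun x => rfl) ?_
  unfold H
  push_cast
  rw [neg_mul_eq_mul_neg, ← inv_neg, mul_comm]
  congr 2
  ring

lemma Ep_bound (q u v : ℝ) (hq : 0 ≤ q) (hu : |u| ≤ 1) (hv : |v| ≤ 1) : |Ep q u v| ≤ 12 * q + 56 := by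
  unfold Ep
  have h1 : |u ^ 3 * v ^ 3| ≤ 1 := by
    rw [abs_mul, abs_pow, abs_pow]
    exact mul_le_one₀ (pow_le_one₀ (abs_nonneg _) hu) (by positivity) (pow_le_one₀ (abs_nonneg _) hv)
  have m1 : |u ^ 3| ≤ 1 := by rw [abs_pow]; exact pow_le_one₀ (abs_nonneg _) hu
  have m2 : |v ^ 3| ≤ 1 := by rw [abs_pow]; exact pow_le_one₀ (abs_nonneg _) hv
  have m3 : |u ^ 2 * v| ≤ 1 := by
    rw [abs_mul, abs_pow]
    exact mul_le_one₀ (pow_le_one₀ (abs_nonneg _) hu) (by positivity) hv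
  have m4 : |u * v ^ 2| ≤ 1 := by
    rw [abs_mul, abs_pow]
    exact mul_le_one₀ hu (by positivity) (pow_le_one₀ (abs_nonneg _) hv)
  have h2 : |6 * q * (u + v) - (10 * u ^ 3 + 18 * u ^ 2 * v + 18 * u * v ^ 2 + 10 * v ^ 3)| ≤ 12 * q + 56 := by
    rw [abs_le] at *
    constructor <;> nlinarith
  rw [abs_mul]
  calc _ ≤ 1 * (12 * q + 56) := mul_le_mul h1 h2 (abs_nonneg _) zero_le_one
    _ = _ := one_mul _

lemma Ep_neg (q u v : ℝ) : Ep q (-u) (-v) = - Ep q u v := by unfold Ep; ring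
lemma Ep_comm (q u v : ℝ) : Ep q u v = Ep q v u := by unfold Ep; ring

lemma F1 (q m n : ℝ) : F q (m + n) n = Ep q (m + n)⁻¹ n⁻¹ - Ep q (m + n)⁻¹ m⁻¹ + Ep q (-n)⁻¹ m⁻¹ := by
  unfold F
  rw [show n - (m + n) = -m by ring, show m + n - n = m by ring, inv_neg, inv_neg, inv_neg, Ep_neg]
  ring

lemma H_anti (q m n : ℝ) : H q (m + n) n = - H q (n + m) m := by
  unfold H
  rw [F1, F1, add_comm n m, show m + n - n = m by ring, show m + n - m = n by ring,
    inv_neg, inv_neg, show Ep q (-m⁻¹) n⁻¹ = - Ep q (-n⁻¹) m⁻¹ by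
      rw [← Ep_neg, neg_neg]; exact Ep_comm _ _ _]
  rw [show n ^ 3 * (m + n) ^ 2 * m ^ 3 = m ^ 3 * (m + n) ^ 2 * n ^ 3 by ring]
  ring

lemma H_tr (q m n : ℝ) : H q (-m) n = H q m (m + n) := by
  unfold H F
  rw [show n - -m = m + n by ring, show m + n - m = n by ring, show - m - n = -(m + n) by ring,
    show m - (m + n) = -n by ring, neg_neg, Ep_comm q (-n)⁻¹]
  rw [show n ^ 3 * (-m) ^ 2 * (-(m + n)) ^ 3 = (m + n) ^ 3 * m ^ 2 * (-n) ^ 3 by ring]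
  ring

lemma Zk_nonneg (k : ℕ) : 0 ≤ Zk k := tsum_nonneg (fun n => by positivity)

lemma abs_inv_le_one (x : ℝ) (hx : 1 ≤ x) : |x⁻¹| ≤ 1 := by
  rw [abs_of_nonneg (by positivity)]
  exact inv_le_one_of_one_le₀ hx

lemma hasSum_r1 : HasSum (fun t : ℕ × ℕ => H (Zk 2) ((t.1 : ℝ) + 1 + (t.2 + 1)) ((t.2 : ℝ) + 1)) 0 := by
  have hs : Summable (fun t : ℕ × ℕ => H (Zk 2) ((t.1 : ℝ) + 1 + (t.2 + 1)) ((t.2 : ℝ) + 1)) := by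
    refine Summable.of_norm_bounded (summable2.mul_left (3 * (12 * Zk 2 + 56))) ?_
    rintro ⟨a, b⟩
    simp only
    have hm : (1 : ℝ) ≤ (a : ℝ) + 1 := by simp
    have hn : (1 : ℝ) ≤ (b : ℝ) + 1 := by simp
    generalize (a : ℝ) + 1 = m at *
    generalize (b : ℝ) + 1 = n at *
    have hq := Zk_nonneg 2
    have hmn : 1 ≤ m + n := by linarith
    have b1 := Ep_bound (Zk 2) (m + n)⁻¹ n⁻¹ hq (abs_inv_le_one _ hmn) (abs_inv_le_one _ hn)
    have b2 := Ep_bound (Zk 2) (m + n)⁻¹ m⁻¹ hq (abs_inv_le_one _ hmn) (abs_inv_le_one _ hm)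
    have b3 := Ep_bound (Zk 2) (-n)⁻¹ m⁻¹ hq (by rw [inv_neg, abs_neg]; exact abs_inv_le_one _ hn)
      (abs_inv_le_one _ hm)
    have hF : |F (Zk 2) (m + n) n| ≤ 3 * (12 * Zk 2 + 56) := by
      rw [F1]
      rw [abs_le] at *
      constructor <;> linarith
    unfold H
    rw [norm_mul, Real.norm_eq_abs, Real.norm_eq_abs, show m + n - n = m by ring]
    refine mul_le_mul hF ?_ (abs_nonneg _) (by positivity)
    rw [abs_of_nonneg (by positivity), ← mul_inv]
    apply inv_anti₀ (by positivity)
    have h1 : 1 ≤ (m + n) ^ 2 := one_le_pow₀ hmn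
    calc m ^ 2 * n ^ 2 = n ^ 2 * 1 * m ^ 2 := by ring
      _ ≤ n ^ 3 * (m + n) ^ 2 * m ^ 3 := by
        gcongr <;> first | assumption | norm_num
  obtain ⟨a, ha⟩ := hs
  have h2 := (Equiv.prodComm ℕ ℕ).hasSum_iff.2 ha
  have h3 : HasSum (fun t : ℕ × ℕ => H (Zk 2) ((t.1 : ℝ) + 1 + (t.2 + 1)) ((t.2 : ℝ) + 1)) (-a) :=
    hsc h2.neg (fun t => H_anti _ _ _) rfl
  have : a = 0 := by linarith [ha.unique h3]
  rwa [this] at ha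

noncomputable def Theta (k : ℕ × ℤ) : ℝ := H (Zk 2) k.2 (((k.1 : ℤ) + 1 : ℤ) : ℝ)

lemma hasSum_Theta : HasSum Theta (-2 * Aval) := by
  have r1 : HasSum (fun k : ℕ × ℤ => if (k.1 : ℤ) + 1 < k.2 then Theta k else 0) 0 := by
    refine region (fun t : ℕ × ℕ => (t.2, (t.1 : ℤ) + 1 + (t.2 + 1))) _ ?_ ?_ ?_ (hsc hasSum_r1 ?_ rfl)
    · rintro ⟨a, b⟩; simp only; omega
    · rintro ⟨z, y⟩ h
      simp only at h
      refine ⟨⟨(y - (z + 2)).toNat, z⟩, ?_⟩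
      simp only [Prod.mk.injEq, true_and]
      omega
    · rintro ⟨a, b⟩ ⟨a', b'⟩ h
      simp only [Prod.mk.injEq] at h ⊢
      omega
    · rintro ⟨a, b⟩
      simp only [Theta]
      push_cast
      rfl
  have r2 : HasSum (fun k : ℕ × ℤ => if 0 < k.2 ∧ k.2 < (k.1 : ℤ) + 1 then Theta k else 0) (-Aval) := by
    refine region (fun t : ℕ × ℕ => (t.1 + t.2 + 1, (t.1 : ℤ) + 1)) _ ?_ ?_ ?_ (hsc hasSum_P.neg ?_ rfl)
    · rintro ⟨a, b⟩; simp only; push_cast; omega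
    · rintro ⟨z, y⟩ h
      simp only at h
      refine ⟨⟨(y - 1).toNat, (z - y).toNat⟩, ?_⟩
      simp only [Prod.mk.injEq]
      omega
    · rintro ⟨a, b⟩ ⟨a', b'⟩ h
      simp only [Prod.mk.injEq] at h ⊢
      omega
    · rintro ⟨a, b⟩
      simp only [Theta, neg_neg]
      push_cast
      congr 1
      ring
  have r3 : HasSum (fun k : ℕ × ℤ => if k.2 < 0 then Theta k else 0) (-Aval) := by
    refine region (fun t : ℕ × ℕ => (t.2, -((t.1 : ℤ) + 1))) _ ?_ ?_ ?_ (hsc hasSum_P.neg ?_ rfl)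
    · rintro ⟨a, b⟩; simp only; omega
    · rintro ⟨z, y⟩ h
      simp only at h
      refine ⟨⟨(-y - 1).toNat, z⟩, ?_⟩
      simp only [Prod.mk.injEq, true_and]
      omega
    · rintro ⟨a, b⟩ ⟨a', b'⟩ h
      simp only [Prod.mk.injEq] at h ⊢
      omega
    · rintro ⟨a, b⟩
      simp only [Theta, neg_neg]
      push_cast
      exact H_tr _ _ _
  refine hsc ((r1.add r2).add r3) ?_ (by ring)
  rintro ⟨z, y⟩
  simp only
  by_cases h0 : y = 0 ∨ y = (z : ℤ) + 1
  · have : Theta (z, y) = 0 := by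
      unfold Theta H
      rcases h0 with h | h <;> simp [h]
    simp [this]
  · push Not at h0
    obtain ⟨h0, h1⟩ := h0
    generalize Theta (z, y) = p
    split_ifs <;> first | omega | simp

lemma A_eq : -2 * Aval = -5882 * Zk 17 + (1248 * Zk 2 + 2 * 1566 * Zk 2) * Zk 15
      + (756 * Zk 4 - 780 * Zk 2 * Zk 2) * Zk 13 + (12 * Zk 6 - 24 * Zk 2 * Zk 4) * Zk 11
      + (60 * Zk 2 * Zk 6 - 100 * Zk 8) * Zk 9 := by
  have h := hasSum_Theta.prod_fiberwise (fun z => step2 ((z : ℤ) + 1) (by omega))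
  have k := ((((hasSum_Zk 17 (by norm_num)).mul_left (-5882)).add
    ((hasSum_Zk 15 (by norm_num)).mul_left (1248 * Zk 2 + 2 * 1566 * Zk 2))).add
    ((hasSum_Zk 13 (by norm_num)).mul_left (756 * Zk 4 - 780 * Zk 2 * Zk 2))).add
    ((hasSum_Zk 11 (by norm_num)).mul_left (12 * Zk 6 - 24 * Zk 2 * Zk 4)) |>.add
    ((hasSum_Zk 9 (by norm_num)).mul_left (60 * Zk 2 * Zk 6 - 100 * Zk 8))
  refine h.unique (hsc k (fun z => ?_) rfl)
  simp only [inv_pow]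
  push_cast
  rfl

lemma zeta_Zk (k : ℕ) (hk : 1 < k) : riemannZeta k = (Zk k : ℂ) := by
  rw [zeta_nat_eq_tsum_of_gt_one hk, Zk, Complex.ofReal_tsum,
    Summable.tsum_eq_zero_add]
  · simp [show k ≠ 0 by omega]
  · have := (Real.summable_one_div_nat_pow (p := k)).2 hk
    have := Complex.ofRealCLM.summable this
    simpa using this

lemma Zk_even (k : ℕ) (hk : k ≠ 0) :
    Zk (2 * k) = (-1) ^ (k + 1) * 2 ^ (2 * k - 1) * π ^ (2 * k) * bernoulli (2 * k) / (2 * k).factorial := by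
  have h := hasSum_zeta_nat hk
  have h2 := (hasSum_nat_add_iff' 1).2 h
  refine (hasSum_Zk (2 * k) (by omega)).unique (hsc h2 (fun n => ?_) ?_)
  · simp
  · simp [hk]

lemma Z2 : Zk 2 = π ^ 2 / 6 := by
  have := Zk_even 1 (by norm_num)
  norm_num [bernoulli_two, Nat.factorial] at this
  rw [this]; ring

lemma Z4 : Zk 4 = π ^ 4 / 90 := by
  have := Zk_even 2 (by norm_num)
  have b : bernoulli 4 = -1/30 := by
    rw [bernoulli_eq_bernoulli'_of_ne_one (by norm_num), bernoulli'_four]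
  norm_num [b, Nat.factorial] at this
  rw [this]; ring

lemma b6 : bernoulli' 6 = 1 / 42 := by
  rw [bernoulli'_def]
  have : bernoulli' 5 = 0 := bernoulli'_eq_zero_of_odd (by decide) (by norm_num)
  norm_num [Finset.sum_range_succ, Nat.choose, this]

lemma b8 : bernoulli' 8 = -1 / 30 := by
  rw [bernoulli'_def]
  have h5 : bernoulli' 5 = 0 := bernoulli'_eq_zero_of_odd (by decide) (by norm_num)
  have h7 : bernoulli' 7 = 0 := bernoulli'_eq_zero_of_odd (by decide) (by norm_num)
  norm_num [Finset.sum_range_succ, Nat.choose, h5, h7, b6]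

lemma Z6 : Zk 6 = π ^ 6 / 945 := by
  have := Zk_even 3 (by norm_num)
  have b : bernoulli 6 = 1/42 := by
    rw [bernoulli_eq_bernoulli'_of_ne_one (by norm_num), b6]
  norm_num [b, Nat.factorial] at this
  rw [this]; ring

lemma Z8 : Zk 8 = π ^ 8 / 9450 := by
  have := Zk_even 4 (by norm_num)
  have b : bernoulli 8 = -1/30 := by
    rw [bernoulli_eq_bernoulli'_of_ne_one (by norm_num), b8]
  norm_num [b, Nat.factorial] at this
  rw [this]; ring

lemma A_final : Aval = π ^ 6 / 63 * Zk 11 + 199 * π ^ 4 / 30 * Zk 13 - 365 * π ^ 2 * Zk 15 + 2941 * Zk 17 := by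
  have h := A_eq
  rw [Z2, Z4, Z6, Z8] at h
  linear_combination (-1 / 2) * h

end A3

/-- `ζ₃((2,3,3,3,3,3); A₃) = (π⁶/63) ζ(11) + (199π⁴/30) ζ(13) − 365π² ζ(15) + 2941 ζ(17)`
(Example 5.4 of Komori–Matsumoto–Tsumura). -/
theorem A3_value_233333 :
    (∑' t : ℕ × ℕ × ℕ,
        (1 : ℂ) /
          (((t.1 + 1 : ℕ) : ℂ) ^ 2 * ((t.2.1 + 1 : ℕ) : ℂ) ^ 3 *
            ((t.2.2 + 1 : ℕ) : ℂ) ^ 3 * ((t.1 + 1 + (t.2.1 + 1) : ℕ) : ℂ) ^ 3 *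
            ((t.2.1 + 1 + (t.2.2 + 1) : ℕ) : ℂ) ^ 3 *
            ((t.1 + 1 + (t.2.1 + 1) + (t.2.2 + 1) : ℕ) : ℂ) ^ 3)) =
      ((π : ℂ) ^ 6 / 63) * riemannZeta 11 + (199 * (π : ℂ) ^ 4 / 30) * riemannZeta 13 -
        365 * (π : ℂ) ^ 2 * riemannZeta 15 + 2941 * riemannZeta 17 := by
  have h11 := A3.zeta_Zk 11 (by norm_num)
  have h13 := A3.zeta_Zk 13 (by norm_num)
  have h15 := A3.zeta_Zk 15 (by norm_num)
  have h17 := A3.zeta_Zk 17 (by norm_num)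
  push_cast at h11 h13 h15 h17
  rw [h11, h13, h15, h17]
  have h := congrArg (fun r : ℝ => (r : ℂ)) A3.A_final
  simp only [A3.Aval, Complex.ofReal_tsum] at h
  push_cast at h
  rw [← h]
  refine tsum_congr (fun t => ?_)
  unfold A3.sA
  push_cast
  rw [one_div]
end

section
/- Σ_{l,m,n ≥ 1} (−1)^{l+n} / (l² m³ n³ (l+m)³ (m+n)³ (l+m+n)³) = (17π⁸/344064)·ζ(9) + (22847π⁶/1720320)·ζ(11) + (49005π⁴/16384)·ζ(13) + (3768307π²/98304)·ζ(15) − (11189819/16384)·ζ(17). -/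
open Complex Real


noncomputable def KF (x : ℕ × ℤ × ℤ) : ℂ :=
  (-1 : ℂ) ^ ((x.1 : ℤ) + 1 + x.2.1 + x.2.2) /
    (((x.1 : ℂ) + 1) ^ 3 * (x.2.1 : ℂ) ^ 3 * ((x.1 : ℂ) + 1 - x.2.1) ^ 3 *
      (x.2.2 : ℂ) ^ 3 * ((x.1 : ℂ) + 1 - x.2.2) ^ 3 * ((x.2.1 : ℂ) - x.2.2) ^ 2)

noncomputable def KA (t : ℕ × ℕ × ℕ) : ℂ :=
  (-1 : ℂ) ^ ((t.1 + 1) + (t.2.2 + 1)) /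
          (((t.1 + 1 : ℕ) : ℂ) ^ 2 * ((t.2.1 + 1 : ℕ) : ℂ) ^ 3 *
            ((t.2.2 + 1 : ℕ) : ℂ) ^ 3 * ((t.1 + 1 + (t.2.1 + 1) : ℕ) : ℂ) ^ 3 *
            ((t.2.1 + 1 + (t.2.2 + 1) : ℕ) : ℂ) ^ 3 *
            ((t.1 + 1 + (t.2.1 + 1) + (t.2.2 + 1) : ℕ) : ℂ) ^ 3)

lemma sgn_eq (x y k : ℤ) (h : x = y + 2 * k) : (-1 : ℂ) ^ x = (-1 : ℂ) ^ y := by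
  rw [h, zpow_add₀ (by norm_num), zpow_mul]; norm_num

lemma field_id (s l m n : ℂ) (hl : l ≠ 0) (hm : m ≠ 0) (hn : n ≠ 0) (h1 : l + m ≠ 0)
    (h2 : m + n ≠ 0) (h3 : l + m + n ≠ 0) :
    s / (l^3 * (-m)^3 * (l+m)^3 * (-m-n)^3 * (l+m+n)^3 * n^2)
    + s / ((l+m)^3 * m^3 * l^3 * (-n)^3 * (l+m+n)^3 * (m+n)^2)
    + s / ((l+m+n)^3 * (m+n)^3 * l^3 * n^3 * (l+m)^3 * m^2)
    + s / (m^3 * (l+m)^3 * (-l)^3 * (-n)^3 * (m+n)^3 * (l+m+n)^2)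
    + s / ((m+n)^3 * (l+m+n)^3 * (-l)^3 * n^3 * m^3 * (l+m)^2)
    + s / (n^3 * (l+m+n)^3 * (-l-m)^3 * (m+n)^3 * (-m)^3 * l^2)
    = s / (l^2 * m^3 * n^3 * (l+m)^3 * (m+n)^3 * (l+m+n)^3)
    + s / (n^2 * m^3 * l^3 * (m+n)^3 * (l+m)^3 * (l+m+n)^3) := by
  have e1 : (-m-n) = -(m+n) := by ring
  have e2 : (-l-m) = -(l+m) := by ring
  rw [e1, e2]
  generalize ha : l + m + n = c at *
  generalize hb : l + m = a at *
  generalize hd : m + n = b at *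
  field_simp
  subst ha hd
  rw [← hb]
  ring

def K1 (t : ℕ × ℕ × ℕ) : ℕ × ℤ × ℤ := (t.1, -((t.2.1:ℤ)+1), -((t.2.1:ℤ)+1)-((t.2.2:ℤ)+1))
def K2 (t : ℕ × ℕ × ℕ) : ℕ × ℤ × ℤ := (t.1+t.2.1+1, ((t.2.1:ℤ)+1), -((t.2.2:ℤ)+1))
def K3 (t : ℕ × ℕ × ℕ) : ℕ × ℤ × ℤ := (t.1+t.2.1+t.2.2+2, ((t.2.1:ℤ)+1)+((t.2.2:ℤ)+1), ((t.2.2:ℤ)+1))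
def K4 (t : ℕ × ℕ × ℕ) : ℕ × ℤ × ℤ := (t.2.1, ((t.1:ℤ)+1)+((t.2.1:ℤ)+1), -((t.2.2:ℤ)+1))
def K5 (t : ℕ × ℕ × ℕ) : ℕ × ℤ × ℤ := (t.2.1+t.2.2+1, ((t.1:ℤ)+1)+((t.2.1:ℤ)+1)+((t.2.2:ℤ)+1), ((t.2.2:ℤ)+1))
def K6 (t : ℕ × ℕ × ℕ) : ℕ × ℤ × ℤ := (t.2.2, ((t.1:ℤ)+1)+((t.2.1:ℤ)+1)+((t.2.2:ℤ)+1), ((t.2.1:ℤ)+1)+((t.2.2:ℤ)+1))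

lemma KF_eq (n : ℕ) (q r : ℤ) (s N Q R NQ NR QR : ℂ)
    (h0 : (-1 : ℂ) ^ ((n : ℤ) + 1 + q + r) = s) (h1 : (n : ℂ) + 1 = N) (h2 : (q : ℂ) = Q)
    (h3 : (n : ℂ) + 1 - q = NQ) (h4 : (r : ℂ) = R) (h5 : (n : ℂ) + 1 - r = NR)
    (h6 : (q : ℂ) - r = QR) : KF (n, q, r) = s / (N^3 * Q^3 * NQ^3 * R^3 * NR^3 * QR^2) := by
  subst h0 h1 h2 h3 h4 h5 h6
  rfl

lemma Ksum (t : ℕ × ℕ × ℕ) :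
    KF (K1 t) + KF (K2 t) + KF (K3 t) + KF (K4 t) + KF (K5 t) + KF (K6 t)
      = KA t + KA (t.2.2, t.2.1, t.1) := by
  obtain ⟨i, j, k⟩ := t
  have hs : (-1 : ℂ) ^ ((i + 1) + (k + 1)) = (-1 : ℂ) ^ ((i:ℤ) + 1 + (k + 1)) := by
    rw [← zpow_natCast]; push_cast; rfl
  have hs' : (-1 : ℂ) ^ ((k + 1) + (i + 1)) = (-1 : ℂ) ^ ((i:ℤ) + 1 + (k + 1)) := by
    rw [← hs, add_comm]
  have key := field_id ((-1 : ℂ) ^ ((i:ℤ) + 1 + (k + 1))) ((i + 1 : ℕ):ℂ) ((j + 1 : ℕ):ℂ)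
    ((k + 1 : ℕ):ℂ) (Nat.cast_ne_zero.2 (by omega)) (Nat.cast_ne_zero.2 (by omega))
    (Nat.cast_ne_zero.2 (by omega)) (by rw [← Nat.cast_add]; exact Nat.cast_ne_zero.2 (by omega))
    (by rw [← Nat.cast_add]; exact Nat.cast_ne_zero.2 (by omega))
    (by rw [← Nat.cast_add, ← Nat.cast_add]; exact Nat.cast_ne_zero.2 (by omega))
  have r : KA (k, j, i) = (-1 : ℂ) ^ ((i:ℤ) + 1 + (k + 1)) /
      (((k+1:ℕ):ℂ)^2 * ((j+1:ℕ):ℂ)^3 * ((i+1:ℕ):ℂ)^3 * (((j+1:ℕ):ℂ)+((k+1:ℕ):ℂ))^3 *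
        (((i+1:ℕ):ℂ)+((j+1:ℕ):ℂ))^3 * (((i+1:ℕ):ℂ)+((j+1:ℕ):ℂ)+((k+1:ℕ):ℂ))^3) := by
    rw [← hs']
    simp only [KA]
    rw [show k + 1 + (j+1) + (i+1) = i+1+(j+1)+(k+1) by ring, show k+1+(j+1) = j+1+(k+1) by ring,
      show j+1+(i+1) = i+1+(j+1) by ring]
    simp only [Nat.cast_add, Nat.cast_one]
  have l : KA (i, j, k) = (-1 : ℂ) ^ ((i:ℤ) + 1 + (k + 1)) /
      (((i+1:ℕ):ℂ)^2 * ((j+1:ℕ):ℂ)^3 * ((k+1:ℕ):ℂ)^3 * (((i+1:ℕ):ℂ)+((j+1:ℕ):ℂ))^3 *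
        (((j+1:ℕ):ℂ)+((k+1:ℕ):ℂ))^3 * (((i+1:ℕ):ℂ)+((j+1:ℕ):ℂ)+((k+1:ℕ):ℂ))^3) := by
    rw [← hs]
    simp only [KA]
    simp only [Nat.cast_add, Nat.cast_one]
  rw [r, l, ← key]
  simp only [K1, K2, K3, K4, K5, K6]
  congr 1
  · congr 1
    · congr 1
      · congr 1
        · congr 1
          · apply KF_eq
            · apply sgn_eq _ _ (-(j:ℤ)-k-2); ring
            all_goals push_cast; ring
          · apply KF_eq
            · apply sgn_eq _ _ ((j:ℤ)-k); push_cast; ring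
            all_goals push_cast; ring
        · apply KF_eq
          · apply sgn_eq _ _ ((j:ℤ)+k+2); push_cast; ring
          all_goals push_cast; ring
      · apply KF_eq
        · apply sgn_eq _ _ ((j:ℤ)-k); push_cast; ring
        all_goals push_cast; ring
    · apply KF_eq
      · apply sgn_eq _ _ ((j:ℤ)+k+2); push_cast; ring
      all_goals push_cast; ring
  · apply KF_eq
    · apply sgn_eq _ _ ((j:ℤ)+k+2); push_cast; ring
    all_goals push_cast; ring

lemma hasSum_chamber (K : ℕ × ℕ × ℕ → ℕ × ℤ × ℤ) (P : ℕ × ℤ × ℤ → Prop) [DecidablePred P]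
    (hK : Function.Injective K) (hP : ∀ t, P (K t)) (hR : ∀ x, P x → ∃ t, K t = x) :
    ∑' x, (if P x then KF x else 0) = ∑' t, KF (K t) := by
  rw [← hK.tsum_eq (f := fun x => if P x then KF x else 0)]
  · simp [hP]
  · intro x hx
    simp only [Function.mem_support, ne_eq, ite_eq_right_iff, not_forall] at hx
    exact hR x hx.1

lemma summable_ite (P : ℕ × ℤ × ℤ → Prop) [DecidablePred P] (hF : Summable KF) :
    Summable (fun x => if P x then KF x else 0) := by
  have := hF.indicator {x | P x}
  refine this.congr (fun x => ?_)
  simp [Set.indicator]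

lemma summable_KF : Summable KF := by
  have h0 : Summable (fun n : ℕ => 1 / ((n:ℝ)+1)^3) := by
    have := (summable_nat_add_iff 1).2 (Real.summable_one_div_nat_pow (p := 3).2 (by norm_num))
    simpa using this
  have h1 : Summable (fun n : ℤ => ‖1 / (n:ℝ)^3‖) :=
    (Real.summable_one_div_int_pow (p := 3).2 (by norm_num)).norm
  have h2 := Summable.mul_of_nonneg h1 h1 (fun _ => norm_nonneg _) (fun _ => norm_nonneg _)
  have h3 := Summable.mul_of_nonneg h0 h2 (fun _ => by positivity) (fun _ => by positivity)
  refine Summable.of_norm_bounded h3 ?_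
  rintro ⟨n, q, r⟩
  have key : ∀ z : ℤ, ∀ k : ℕ, ‖(((z:ℂ))^k)⁻¹‖ ≤ 1 := by
    intro z k
    rw [norm_inv, norm_pow, Complex.norm_intCast]
    rcases eq_or_ne z 0 with rfl | hz
    · rcases k with _ | k <;> simp
    · apply inv_le_one_of_one_le₀
      apply one_le_pow₀
      exact_mod_cast Int.one_le_abs hz
  have e : KF (n,q,r) = (-1)^((n : ℤ) + 1 + q + r) * ((((n:ℂ)+1)^3)⁻¹ * ((((q:ℂ))^3)⁻¹ * (((r:ℂ))^3)⁻¹)) *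
      (((((n+1-q:ℤ):ℂ))^3)⁻¹ * ((((n+1-r:ℤ):ℂ))^3)⁻¹ * ((((q-r:ℤ):ℂ))^2)⁻¹) := by
    simp only [KF, div_eq_mul_inv, mul_inv]
    push_cast
    ring
  rw [e, norm_mul, norm_mul]
  have a1 := key (n+1-q) 3
  have a2 := key (n+1-r) 3
  have a3 := key (q-r) 2
  have s1 : ‖(-1:ℂ)^((n : ℤ) + 1 + q + r)‖ = 1 := by simp
  have : ‖(((n+1-q:ℤ):ℂ)^3)⁻¹ * (((n+1-r:ℤ):ℂ)^3)⁻¹ * (((q-r:ℤ):ℂ)^2)⁻¹‖ ≤ 1 := by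
    rw [norm_mul, norm_mul]
    exact mul_le_one₀ (mul_le_one₀ a1 (norm_nonneg _) a2) (norm_nonneg _) a3
  rw [s1, one_mul]
  refine (mul_le_of_le_one_right (norm_nonneg _) this).trans (le_of_eq ?_)
  simp only [norm_mul, norm_inv, norm_pow, Complex.norm_intCast, norm_div, norm_one, one_div, Real.norm_eq_abs]
  have : ‖(n:ℂ)+1‖ = (n:ℝ)+1 := by
    have : (n:ℂ)+1 = ((n+1:ℕ):ℂ) := by push_cast; rfl
    rw [this, Complex.norm_natCast]; push_cast; rfl
  rw [this]

lemma summable_KA : Summable KA := by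
  have h0 : Summable (fun n : ℕ => 1 / ((n:ℝ)+1)^2) := by
    have := (summable_nat_add_iff 1).2 (Real.summable_one_div_nat_pow (p := 2).2 (by norm_num))
    simpa using this
  have h2 := Summable.mul_of_nonneg h0 h0 (fun _ => by positivity) (fun _ => by positivity)
  have h3 := Summable.mul_of_nonneg h0 h2 (fun _ => by positivity) (fun _ => by positivity)
  refine Summable.of_norm_bounded h3 ?_
  rintro ⟨l, m, n⟩
  simp only [KA, norm_div, norm_mul, norm_pow, norm_neg, norm_one, one_pow, Complex.norm_natCast,
    div_mul_div_comm, one_mul]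
  apply one_div_le_one_div_of_le (by positivity)
  push_cast
  have hp : ∀ x y : ℝ, 0 ≤ x → 0 ≤ y → 1 ≤ (x + 1 + (y + 1))^3 := by
    intro x y hx hy
    apply one_le_pow₀; linarith
  have hl : (0:ℝ) ≤ l := by positivity
  have hm : (0:ℝ) ≤ m := by positivity
  have hn : (0:ℝ) ≤ n := by positivity
  have b1 := hp l m hl hm
  have b2 := hp m n hm hn
  have b3 : 1 ≤ ((l:ℝ)+1+(m+1)+(n+1))^3 := by apply one_le_pow₀; linarith
  have b4 : ((m:ℝ)+1)^2 ≤ (m+1)^3 := pow_le_pow_right₀ (by linarith) (by norm_num)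
  have b5 : ((n:ℝ)+1)^2 ≤ (n+1)^3 := pow_le_pow_right₀ (by linarith) (by norm_num)
  calc ((l:ℝ)+1)^2 * ((m+1)^2 * (n+1)^2) = ((l:ℝ)+1)^2 * (m+1)^2 * (n+1)^2 * 1 * 1 * 1 := by ring
    _ ≤ _ := by gcongr

lemma KA_swap : ∑' t : ℕ × ℕ × ℕ, KA (t.2.2, t.2.1, t.1) = ∑' t, KA t := by
  let e : ℕ × ℕ × ℕ ≃ ℕ × ℕ × ℕ :=
    ⟨fun t => (t.2.2, t.2.1, t.1), fun t => (t.2.2, t.2.1, t.1), fun _ => rfl, fun _ => rfl⟩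
  exact e.tsum_eq KA

lemma summable_KA_swap : Summable (fun t : ℕ × ℕ × ℕ => KA (t.2.2, t.2.1, t.1)) := by
  let e : ℕ × ℕ × ℕ ≃ ℕ × ℕ × ℕ :=
    ⟨fun t => (t.2.2, t.2.1, t.1), fun t => (t.2.2, t.2.1, t.1), fun _ => rfl, fun _ => rfl⟩
  exact e.summable_iff.2 summable_KA

lemma inj1 : Function.Injective K1 := by
  rintro ⟨a,b,c⟩ ⟨d,e,f⟩ h; simp only [K1, Prod.mk.injEq] at h ⊢; omega
lemma inj2 : Function.Injective K2 := by
  rintro ⟨a,b,c⟩ ⟨d,e,f⟩ h; simp only [K2, Prod.mk.injEq] at h ⊢; omega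
lemma inj3 : Function.Injective K3 := by
  rintro ⟨a,b,c⟩ ⟨d,e,f⟩ h; simp only [K3, Prod.mk.injEq] at h ⊢; omega
lemma inj4 : Function.Injective K4 := by
  rintro ⟨a,b,c⟩ ⟨d,e,f⟩ h; simp only [K4, Prod.mk.injEq] at h ⊢; omega
lemma inj5 : Function.Injective K5 := by
  rintro ⟨a,b,c⟩ ⟨d,e,f⟩ h; simp only [K5, Prod.mk.injEq] at h ⊢; omega
lemma inj6 : Function.Injective K6 := by
  rintro ⟨a,b,c⟩ ⟨d,e,f⟩ h; simp only [K6, Prod.mk.injEq] at h ⊢; omega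

lemma KF_zero (n : ℕ) (q r : ℤ) (h : q = 0 ∨ q = n+1 ∨ r = 0 ∨ r = n+1 ∨ q = r) : KF (n,q,r) = 0 := by
  rcases h with rfl | rfl | rfl | rfl | rfl <;> simp [KF]

lemma KF_symm (n : ℕ) (q r : ℤ) : KF (n,q,r) = KF (n,r,q) := by
  simp only [KF]
  congr 1
  · congr 1; ring
  · ring

lemma half_sum : ∑' x : ℕ × ℤ × ℤ, (if x.2.2 < x.2.1 then KF x else 0) = 2 * ∑' t, KA t := by
  have hF := summable_KF
  have c1 := hasSum_chamber K1 (fun x => x.2.2 < x.2.1 ∧ x.2.1 < 0) inj1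
    (by intro t; simp only [K1]; omega)
    (by rintro ⟨n,q,r⟩ h; refine ⟨(n, (-q-1).toNat, (q-r-1).toNat), ?_⟩
        simp only [K1, Prod.mk.injEq, true_and, and_true] at h ⊢; omega)
  have c2 := hasSum_chamber K2 (fun x => x.2.2 < 0 ∧ 0 < x.2.1 ∧ x.2.1 < x.1 + 1) inj2
    (by intro t; simp only [K2]; omega)
    (by rintro ⟨n,q,r⟩ h; refine ⟨((n-q).toNat, (q-1).toNat, (-r-1).toNat), ?_⟩
        simp only [K2, Prod.mk.injEq, true_and, and_true] at h ⊢; omega)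
  have c3 := hasSum_chamber K3 (fun x => 0 < x.2.2 ∧ x.2.2 < x.2.1 ∧ x.2.1 < x.1 + 1) inj3
    (by intro t; simp only [K3]; omega)
    (by rintro ⟨n,q,r⟩ h; refine ⟨((n-q).toNat, (q-r-1).toNat, (r-1).toNat), ?_⟩
        simp only [K3, Prod.mk.injEq, true_and, and_true] at h ⊢; omega)
  have c4 := hasSum_chamber K4 (fun x => x.2.2 < 0 ∧ x.1 + 1 < x.2.1) inj4
    (by intro t; simp only [K4]; omega)
    (by rintro ⟨n,q,r⟩ h; refine ⟨((q-n-2).toNat, n, (-r-1).toNat), ?_⟩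
        simp only [K4, Prod.mk.injEq, true_and, and_true] at h ⊢; omega)
  have c5 := hasSum_chamber K5 (fun x => 0 < x.2.2 ∧ x.2.2 < x.1 + 1 ∧ x.1 + 1 < x.2.1) inj5
    (by intro t; simp only [K5]; omega)
    (by rintro ⟨n,q,r⟩ h; refine ⟨((q-n-2).toNat, (n-r).toNat, (r-1).toNat), ?_⟩
        simp only [K5, Prod.mk.injEq, true_and, and_true] at h ⊢; omega)
  have c6 := hasSum_chamber K6 (fun x => x.1 + 1 < x.2.2 ∧ x.2.2 < x.2.1) inj6
    (by intro t; simp only [K6]; omega)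
    (by rintro ⟨n,q,r⟩ h; refine ⟨((q-r-1).toNat, (r-n-2).toNat, n), ?_⟩
        simp only [K6, Prod.mk.injEq, true_and, and_true] at h ⊢; omega)
  have s1 : Summable (fun t => KF (K1 t)) := hF.comp_injective inj1
  have s2 : Summable (fun t => KF (K2 t)) := hF.comp_injective inj2
  have s3 : Summable (fun t => KF (K3 t)) := hF.comp_injective inj3
  have s4 : Summable (fun t => KF (K4 t)) := hF.comp_injective inj4
  have s5 : Summable (fun t => KF (K5 t)) := hF.comp_injective inj5
  have s6 : Summable (fun t => KF (K6 t)) := hF.comp_injective inj6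
  have R : ∑' t, (KF (K1 t) + KF (K2 t) + KF (K3 t) + KF (K4 t) + KF (K5 t) + KF (K6 t))
      = 2 * ∑' t, KA t := by
    simp only [Ksum]
    rw [summable_KA.tsum_add summable_KA_swap, KA_swap]; ring
  rw [← R]
  rw [((((s1.add s2).add s3).add s4).add s5).tsum_add s6, (((s1.add s2).add s3).add s4).tsum_add s5,
    ((s1.add s2).add s3).tsum_add s4, (s1.add s2).tsum_add s3, s1.tsum_add s2]
  rw [← c1, ← c2, ← c3, ← c4, ← c5, ← c6]
  have i1 := summable_ite (fun x => x.2.2 < x.2.1 ∧ x.2.1 < 0) hF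
  have i2 := summable_ite (fun x => x.2.2 < 0 ∧ 0 < x.2.1 ∧ x.2.1 < x.1 + 1) hF
  have i3 := summable_ite (fun x => 0 < x.2.2 ∧ x.2.2 < x.2.1 ∧ x.2.1 < x.1 + 1) hF
  have i4 := summable_ite (fun x => x.2.2 < 0 ∧ x.1 + 1 < x.2.1) hF
  have i5 := summable_ite (fun x => 0 < x.2.2 ∧ x.2.2 < x.1 + 1 ∧ x.1 + 1 < x.2.1) hF
  have i6 := summable_ite (fun x => x.1 + 1 < x.2.2 ∧ x.2.2 < x.2.1) hF
  rw [← i1.tsum_add i2, ← (i1.add i2).tsum_add i3, ← ((i1.add i2).add i3).tsum_add i4,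
    ← (((i1.add i2).add i3).add i4).tsum_add i5, ← ((((i1.add i2).add i3).add i4).add i5).tsum_add i6]
  congr 1
  funext ⟨n,q,r⟩
  dsimp only
  by_cases hz : q = 0 ∨ q = n+1 ∨ r = 0 ∨ r = n+1 ∨ q = r
  · simp [KF_zero n q r hz]
  · by_cases a1 : r < q ∧ q < 0
    · simp only [a1.1, a1.2, and_self, if_true]
      rw [if_neg (by omega), if_neg (by omega), if_neg (by omega), if_neg (by omega), if_neg (by omega)]
      simp
    rw [if_neg a1]
    by_cases a2 : r < 0 ∧ 0 < q ∧ q < (n:ℤ) + 1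
    · rw [if_pos (by omega), if_pos a2, if_neg (by omega), if_neg (by omega), if_neg (by omega), if_neg (by omega)]
      simp
    rw [if_neg a2]
    by_cases a3 : 0 < r ∧ r < q ∧ q < (n:ℤ) + 1
    · rw [if_pos (by omega), if_pos a3, if_neg (by omega), if_neg (by omega), if_neg (by omega)]
      simp
    rw [if_neg a3]
    by_cases a4 : r < 0 ∧ (n:ℤ) + 1 < q
    · rw [if_pos (by omega), if_pos a4, if_neg (by omega), if_neg (by omega)]
      simp
    rw [if_neg a4]
    by_cases a5 : 0 < r ∧ r < (n:ℤ) + 1 ∧ (n:ℤ)+1 < q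
    · rw [if_pos (by omega), if_pos a5, if_neg (by omega)]
      simp
    rw [if_neg a5]
    by_cases a6 : (n:ℤ) + 1 < r ∧ r < q
    · rw [if_pos (by omega), if_pos a6]
      simp
    rw [if_neg (by omega), if_neg a6]
    simp

lemma full_sum : ∑' x : ℕ × ℤ × ℤ, KF x = 4 * ∑' t, KA t := by
  have hF := summable_KF
  let e : ℕ × ℤ × ℤ ≃ ℕ × ℤ × ℤ :=
    ⟨fun t => (t.1, t.2.2, t.2.1), fun t => (t.1, t.2.2, t.2.1), fun _ => rfl, fun _ => rfl⟩
  have h2 : ∑' x : ℕ × ℤ × ℤ, (if x.2.1 < x.2.2 then KF x else 0) = 2 * ∑' t, KA t := by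
    rw [← half_sum, ← e.tsum_eq]
    congr 1
    funext ⟨n,q,r⟩
    simp only [e, Equiv.coe_fn_mk]
    rw [KF_symm]
  have : ∀ x : ℕ × ℤ × ℤ, KF x = (if x.2.2 < x.2.1 then KF x else 0) + (if x.2.1 < x.2.2 then KF x else 0) := by
    rintro ⟨n,q,r⟩
    rcases lt_trichotomy q r with h | h | h
    · simp [h, h.le]
    · subst h; simp [KF]
    · simp [h, h.le]
  rw [tsum_congr this, (summable_ite _ hF).tsum_add (summable_ite _ hF), half_sum, h2]
  ring


lemma hs_of {ι : Type} {f g : ι → ℂ} {a b : ℂ} (h : HasSum f a) (h1 : g = f) (h2 : b = a) :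
    HasSum g b := by rw [h1, h2]; exact h

lemma e_ne {e : ℂ} (he : e * e = 1) : e ≠ 0 := by
  rintro rfl; simp at he

lemma e_sq {e : ℂ} (he : e * e = 1) (q : ℤ) : e ^ q * e ^ q = 1 := by
  rw [← mul_zpow, he, one_zpow]

lemma e_neg {e : ℂ} (he : e * e = 1) (q : ℤ) : e ^ (-q) = e ^ q := by
  rw [zpow_neg]
  exact inv_eq_of_mul_eq_one_left (e_sq he q)

lemma e_norm {e : ℂ} (he : e * e = 1) (q : ℤ) : ‖e ^ q‖ = 1 := by
  have h := congrArg norm (e_sq he q)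
  rw [norm_mul, norm_one] at h
  nlinarith [norm_nonneg (e ^ q)]

noncomputable def Zv (e : ℂ) (k : ℕ) : ℂ := ∑' q : ℤ, e ^ q * ((q : ℂ) ^ k)⁻¹

lemma hasSum_Z {e : ℂ} (he : e * e = 1) (k : ℕ) (hk : 2 ≤ k) :
    HasSum (fun q : ℤ => e ^ q * ((q : ℂ) ^ k)⁻¹) (Zv e k) := by
  apply Summable.hasSum
  refine Summable.of_norm_bounded ((Real.summable_one_div_int_pow (p := k).2 (by omega)).norm) ?_
  intro q
  rw [norm_mul, e_norm he]
  simp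

lemma Z_odd {e : ℂ} (he : e * e = 1) (k : ℕ) (hk : Odd k) : Zv e k = 0 := by
  have : Zv e k = - Zv e k := by
    conv_lhs => rw [Zv, ← (Equiv.neg ℤ).tsum_eq]
    rw [Zv, ← tsum_neg]
    congr 1
    funext q
    simp only [Equiv.neg_apply, e_neg he, Int.cast_neg, hk.neg_pow, inv_neg, mul_neg]
  exact CharZero.eq_neg_self_iff.1 this

lemma hasSum_Zc {e : ℂ} (he : e * e = 1) (k : ℕ) (hk : 2 ≤ k) (c : ℤ) :
    HasSum (fun q : ℤ => e ^ q * (((c : ℂ) - q) ^ k)⁻¹) (e ^ c * Zv e k) := by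
  rw [← (Equiv.subLeft c).hasSum_iff]
  refine hs_of ((hasSum_Z he k hk).mul_left (e ^ c)) ?_ rfl
  funext q
  simp only [Function.comp_apply, Equiv.subLeft_apply, Int.cast_sub, sub_sub_cancel]
  rw [sub_eq_add_neg, zpow_add₀ (e_ne he), e_neg he]; ring

lemma hasSum_one {e : ℂ} (he : e * e = 1) :
    HasSum (fun r : ℤ => e ^ r * ((r : ℂ)⁻¹ + (((1:ℤ) : ℂ) - r)⁻¹)) 0 := by
  rw [← (Equiv.addRight (1:ℤ)).hasSum_iff]
  have hs : Summable (fun n : ℕ => e ^ n * (((n:ℂ) + 1)⁻¹ - (n:ℂ)⁻¹)) := by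
    have h0 : Summable (fun n : ℕ => 2 * (1 / ((n:ℝ)+1)^2)) := by
      have := (summable_nat_add_iff 1).2 (Real.summable_one_div_nat_pow (p := 2).2 (by norm_num))
      simpa using this.mul_left 2
    refine Summable.of_norm_bounded h0 ?_
    intro n
    rw [norm_mul, ← zpow_natCast, e_norm he, one_mul]
    rcases n with _ | n
    · norm_num
    · have a1 : ((n+1:ℕ):ℂ) ≠ 0 := Nat.cast_ne_zero.2 (by omega)
      have a2 : ((n+1+1:ℕ):ℂ) ≠ 0 := Nat.cast_ne_zero.2 (by omega)
      have : (((n+1:ℕ):ℂ) + 1)⁻¹ - ((n+1:ℕ):ℂ)⁻¹ = -(1 / (((n+1:ℕ):ℂ) * ((n+1+1:ℕ):ℂ))) := by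
        push_cast at a1 a2 ⊢
        field_simp
        ring
      rw [this, norm_neg, norm_div, norm_mul, Complex.norm_natCast, Complex.norm_natCast, norm_one]
      push_cast
      rw [mul_one_div, div_le_div_iff₀ (by positivity) (by positivity)]
      nlinarith [(Nat.cast_nonneg n : (0:ℝ) ≤ n)]
  obtain ⟨s, hs'⟩ := hs
  have hz : e * s + s = 0 := by
    have : (e - 1) * (e + 1) = 0 := by linear_combination he
    rcases mul_eq_zero.1 this with h | h
    · have h1 : e = 1 := by linear_combination h
      subst h1
      have ht := hs'.tendsto_sum_nat
      have h2 : ∀ n : ℕ, ∑ i ∈ Finset.range n, (1:ℂ) ^ i * (((i:ℂ) + 1)⁻¹ - (i:ℂ)⁻¹) = (n:ℂ)⁻¹ := by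
        intro n
        have := Finset.sum_range_sub (fun i : ℕ => (i:ℂ)⁻¹) n
        simpa using this
      simp only [h2] at ht
      have := tendsto_nhds_unique ht (tendsto_inv_atTop_nhds_zero_nat (𝕜 := ℂ))
      rw [this]; simp
    · linear_combination s * h
  rw [← hz]
  apply HasSum.of_nat_of_neg_add_one
  · refine hs_of (hs'.mul_left e) ?_ rfl
    funext n
    simp only [Function.comp_apply, Equiv.coe_addRight]
    rw [zpow_add₀ (e_ne he), zpow_natCast, zpow_one]
    push_cast
    rw [show (1:ℂ) - (n + 1) = -n by ring, inv_neg]; ring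
  · refine hs_of (hs') ?_ rfl
    funext n
    simp only [Function.comp_apply, Equiv.coe_addRight]
    rw [show (-((n:ℤ) + 1) + 1) = -(n:ℤ) by ring, e_neg he, zpow_natCast]
    push_cast
    rw [show (1:ℂ) - (-n) = n + 1 by ring, inv_neg]; ring

lemma hasSum_v {e : ℂ} (he : e * e = 1) (c : ℤ) :
    HasSum (fun r : ℤ => e ^ r * ((r : ℂ)⁻¹ + ((c : ℂ) - r)⁻¹)) 0 := by
  have sh : ∀ c : ℤ, HasSum (fun r : ℤ => e ^ r * (((r:ℂ) - c)⁻¹ + ((c : ℂ) + 1 - r)⁻¹)) 0 := by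
    intro c
    rw [← (Equiv.addRight c).hasSum_iff]
    refine hs_of ((hasSum_one he).mul_left (e ^ c)) ?_ ?_
    · funext r
      simp only [Function.comp_apply, Equiv.coe_addRight]
      rw [zpow_add₀ (e_ne he)]
      push_cast
      rw [show (r:ℂ) + c - c = r by ring, show (c:ℂ) + 1 - (r + c) = 1 - r by ring]; ring
    · simp
  induction c using Int.induction_on with
  | zero =>
    convert hasSum_zero using 2 with r
    simp [inv_neg]
  | succ i ih =>
    refine hs_of (ih.add (sh i)) ?_ ?_
    · funext r
      push_cast
      rw [show ((i:ℂ) - r) = -(r - i) by ring, inv_neg]; ring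
    · simp
  | pred i ih =>
    refine hs_of (ih.sub (sh (-i-1))) ?_ ?_
    · funext r
      push_cast
      rw [show (-(i:ℂ) - 1 + 1 - r) = -i - r by ring, show (-(i:ℂ) - 1 - r) = -(r - (-i-1)) by ring, inv_neg]; ring
    · simp

def cc : ℕ → ℕ → ℕ → ℕ
  | 0, _, _ => 0
  | a+1, 0, i => if i = a+1 then 1 else 0
  | a+1, b+1, i => cc (a+1) b i + cc a (b+1) i

def dd : ℕ → ℕ → ℕ
  | 0, _ => 1
  | _+1, 0 => 0
  | a+1, b+1 => dd (a+1) b + dd a (b+1)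

noncomputable def tau (e : ℂ) (N : ℤ) (a b : ℕ) (q : ℤ) : ℂ :=
  if q = 0 ∨ q = N then 0 else e ^ q * ((q : ℂ) ^ a)⁻¹ * (((N : ℂ) - q) ^ b)⁻¹

noncomputable def Zt (e : ℂ) (i : ℕ) : ℂ := if i ≤ 1 then 0 else Zv e i

noncomputable def Tv (e : ℂ) (N : ℤ) (a b : ℕ) : ℂ :=
  ((N : ℂ) ^ (a+b))⁻¹ * (∑ i ∈ Finset.range 9, (cc a b i : ℂ) * (Zt e i * (N:ℂ)^i)
    + e ^ N * ∑ i ∈ Finset.range 9, (cc b a i : ℂ) * (Zt e i * (N:ℂ)^i) - dd a b - e ^ N * dd b a)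

lemma cc_sum (a : ℕ) (ha : 2 ≤ a) (ha' : a ≤ 8) (e : ℂ) (N : ℤ) :
    ∑ i ∈ Finset.range 9, (cc a 0 i : ℂ) * (Zt e i * (N:ℂ)^i) = Zv e a * (N:ℂ)^a := by
  obtain ⟨a, rfl⟩ : ∃ b, a = b + 1 := ⟨a - 1, by omega⟩
  rw [Finset.sum_eq_single_of_mem (a+1) (Finset.mem_range.2 (by omega))]
  · simp [cc, Zt, show a ≠ 0 by omega]
  · intro b _ hb
    simp [cc, hb]

lemma hasSum_tau {e : ℂ} (he : e * e = 1) (N : ℤ) (hN : N ≠ 0) (a b : ℕ) (h : 2 ≤ a + b)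
    (ha : a ≤ 8) (hb : b ≤ 8) : HasSum (tau e N a b) (Tv e N a b) := by
  have hNc : (N:ℂ) ≠ 0 := by exact_mod_cast hN
  induction a generalizing b with
  | zero =>
    have h1 := (hasSum_Zc he b (by omega) N).sub (hasSum_ite_eq (0:ℤ) (((N:ℂ)^b)⁻¹))
    refine hs_of h1 ?_ ?_
    · funext q
      by_cases h0 : q = 0
      · simp [tau, h0]
      · by_cases h2 : q = N
        · simp [tau, h2, hN, show b ≠ 0 by omega]
        · simp [tau, h0, h2]
    · obtain ⟨b, rfl⟩ : ∃ c, b = c + 1 := ⟨b - 1, by omega⟩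
      simp only [Tv, cc_sum (b+1) (by omega) hb]
      simp only [cc, dd]
      field_simp
      simp
  | succ a iha =>
    induction b with
    | zero =>
      have h1 := (hasSum_Z he (a+1) (by omega)).sub (hasSum_ite_eq N (e^N * ((N:ℂ)^(a+1))⁻¹))
      refine hs_of h1 ?_ ?_
      · funext q
        by_cases h0 : q = 0
        · simp [tau, h0, hN.symm]
        · by_cases h2 : q = N
          · simp [tau, h2]
          · simp [tau, h0, h2]
      · simp only [Tv, cc_sum (a+1) (by omega) ha]
        simp only [cc, dd]
        field_simp
        simp
    | succ b ihb =>
      by_cases hab : a = 0 ∧ b = 0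
      · obtain ⟨rfl, rfl⟩ := hab
        have h1 := (((hasSum_v he N).sub (hasSum_ite_eq (0:ℤ) (((N:ℂ))⁻¹))).sub
          (hasSum_ite_eq N (e^N * ((N:ℂ))⁻¹))).mul_left ((N:ℂ)⁻¹)
        refine hs_of h1 ?_ ?_
        · funext q
          by_cases h0 : q = 0
          · simp [tau, h0, hN.symm]
          · by_cases h2 : q = N
            · simp [tau, h2, hN]
            · have q0 : (q:ℂ) ≠ 0 := by exact_mod_cast h0
              have q1 : (N:ℂ) - q ≠ 0 := by
                rw [sub_ne_zero]; exact_mod_cast (Ne.symm h2)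
              simp only [tau, h0, h2, or_self, if_false]
              field_simp
              ring
        · simp [Tv, cc, dd, Finset.sum_range_succ, Zt]
          field_simp
      · have h1 := ((ihb (by omega) (by omega)).add (iha (b+1) (by omega) (by omega) hb)).mul_left ((N:ℂ)⁻¹)
        refine hs_of h1 ?_ ?_
        · funext q
          by_cases h0 : q = 0 ∨ q = N
          · simp [tau, h0]
          · have q0 : (q:ℂ) ≠ 0 := by
              have : q ≠ 0 := by tauto
              exact_mod_cast this
            have q1 : (N:ℂ) - q ≠ 0 := by
              have : N ≠ q := by tauto
              rw [sub_ne_zero]; exact_mod_cast this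
            simp only [tau, h0, if_false]
            field_simp
            ring
        · simp only [Tv, cc, dd, Nat.cast_add, add_mul, Finset.sum_add_distrib]
          rw [show a + (b+1) = a+1+b by ring, show a+1+(b+1) = a+1+b+1 by ring, pow_succ _ (a+1+b), mul_inv]
          ring


noncomputable def R0 (z N q : ℂ) : ℂ :=
  10 / (N^6*q^2) + 12/(N^5*q^3) + 9/(N^4*q^4) + 4/(N^3*q^5) - z * (3/(N^4*q^2) + 2/(N^3*q^3))

lemma pf_id (x y z : ℂ) (hx : x ≠ 0) (hy : y ≠ 0) (hz : z ≠ 0) (hq : x + z ≠ 0) (hN : x + y ≠ 0)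
    (hp : y - z ≠ 0) (N q p : ℂ) (eN : N = x + y) (eq : q = x + z) (ep : p = y - z) :
    (x^3)⁻¹ * (y^3)⁻¹ * (z^2)⁻¹ =
      1/(N^3*q^2) * (x^3)⁻¹ + (3/(N^4*q^2)+2/(N^3*q^3)) * (x^2)⁻¹
      + 1/(N^3*p^2) * (y^3)⁻¹ + (3/(N^4*p^2)+2/(N^3*p^3)) * (y^2)⁻¹
      + 1/(q^3*p^3) * (z^2)⁻¹
      + (6/(N^5*p^2)+6/(N^4*p^3)+3/(N^3*p^4)) * (x⁻¹+y⁻¹)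
      + (3/(q^4*p^3)-3/(q^3*p^4)) * (x⁻¹+z⁻¹) := by
  rw [← eN] at hN
  rw [← eq] at hq
  rw [← ep] at hp
  field_simp
  subst eN eq ep
  ring

noncomputable def pfR (N q r : ℂ) : ℂ :=
      1/(N^3*q^2) * (r^3)⁻¹ + (3/(N^4*q^2)+2/(N^3*q^3)) * (r^2)⁻¹
      + 1/(N^3*(N-q)^2) * ((N-r)^3)⁻¹ + (3/(N^4*(N-q)^2)+2/(N^3*(N-q)^3)) * ((N-r)^2)⁻¹
      + 1/(q^3*(N-q)^3) * ((q-r)^2)⁻¹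
      + (6/(N^5*(N-q)^2)+6/(N^4*(N-q)^3)+3/(N^3*(N-q)^4)) * (r⁻¹+(N-r)⁻¹)
      + (3/(q^4*(N-q)^3)-3/(q^3*(N-q)^4)) * (r⁻¹+(q-r)⁻¹)

lemma hasSum_H {e : ℂ} (he : e * e = 1) (N q : ℤ) (hN : N ≠ 0) (hq : q ≠ 0) (hqN : q ≠ N) :
    HasSum (fun r : ℤ => e ^ r * (((r:ℂ)^3)⁻¹ * (((N:ℂ)-r)^3)⁻¹ * (((q:ℂ)-r)^2)⁻¹))
      (-(e ^ q * (6 * (N:ℂ)^2 / ((q:ℂ)*(N-q))^5 - 21 / ((q:ℂ)*(N-q))^4 - Zv e 2 / ((q:ℂ)*(N-q))^3)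
        + R0 (Zv e 2) N q + e ^ N * R0 (Zv e 2) N (N - q))) := by
  have hNc : (N:ℂ) ≠ 0 := by exact_mod_cast hN
  have hqc : (q:ℂ) ≠ 0 := by exact_mod_cast hq
  have hpc : (N:ℂ) - q ≠ 0 := by rw [sub_ne_zero]; exact_mod_cast hqN.symm
  have h : HasSum (fun r : ℤ => e ^ r * pfR N q r)
      ((3/((N:ℂ)^4*q^2)+2/((N:ℂ)^3*q^3)) * Zv e 2
      + (3/((N:ℂ)^4*(N-q)^2)+2/((N:ℂ)^3*(N-q)^3)) * (e ^ N * Zv e 2)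
      + 1/((q:ℂ)^3*(N-q)^3) * (e ^ q * Zv e 2)) := by
    have h3 := (hasSum_Z he 3 (by norm_num)).mul_left (1/((N:ℂ)^3*q^2))
    have h2 := (hasSum_Z he 2 (by norm_num)).mul_left (3/((N:ℂ)^4*q^2)+2/((N:ℂ)^3*q^3))
    have g3 := (hasSum_Zc he 3 (by norm_num) N).mul_left (1/((N:ℂ)^3*(N-q)^2))
    have g2 := (hasSum_Zc he 2 (by norm_num) N).mul_left (3/((N:ℂ)^4*(N-q)^2)+2/((N:ℂ)^3*(N-q)^3))
    have k2 := (hasSum_Zc he 2 (by norm_num) q).mul_left (1/((q:ℂ)^3*(N-q)^3))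
    have v1 := (hasSum_v he N).mul_left (6/((N:ℂ)^5*(N-q)^2)+6/((N:ℂ)^4*(N-q)^3)+3/((N:ℂ)^3*(N-q)^4))
    have v2 := (hasSum_v he q).mul_left (3/((q:ℂ)^4*(N-q)^3)-3/((q:ℂ)^3*(N-q)^4))
    refine hs_of ((((((h3.add h2).add g3).add g2).add k2).add v1).add v2) ?_ ?_
    · funext r
      simp only [pfR]
      ring
    · rw [Z_odd he 3 (by decide)]; ring
  have h' := ((h.sub (hasSum_ite_eq (0:ℤ) (pfR N q 0))).sub
    (hasSum_ite_eq N (e ^ N * pfR N q N))).sub (hasSum_ite_eq q (e ^ q * pfR N q q))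
  refine hs_of h' ?_ ?_
  · funext r
    by_cases r0 : r = 0
    · simp [r0, hN.symm, hq.symm]
    by_cases r1 : r = N
    · simp [r1, hN, hqN.symm]
    by_cases r2 : r = q
    · simp [r2, hq, hqN]
    simp only [r0, r1, r2, if_false, sub_zero]
    have hr : (r:ℂ) ≠ 0 := by exact_mod_cast r0
    have hr1 : (N:ℂ) - r ≠ 0 := by rw [sub_ne_zero]; exact_mod_cast (Ne.symm r1)
    have hr2 : (q:ℂ) - r ≠ 0 := by rw [sub_ne_zero]; exact_mod_cast (Ne.symm r2)
    rw [pf_id (r:ℂ) ((N:ℂ) - r) ((q:ℂ)-r) hr hr1 hr2 (by simpa using hqc) (by simpa using hNc)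
      (by simpa using hpc) N q (N-q) (by ring) (by ring) (by ring)]
    rfl
  · simp only [pfR, R0]
    generalize Zv e 2 = z
    generalize e ^ q = s
    generalize e ^ N = w
    simp only [sub_self, ne_eq, OfNat.ofNat_ne_zero, not_false_eq_true, zero_pow, inv_zero, mul_zero,
      add_zero, zero_add, sub_zero]
    have : (q:ℂ) - N = -(N - q) := by ring
    rw [this]
    generalize hp : (N:ℂ) - q = p at *
    have hN' : (N:ℂ) = q + p := by rw [← hp]; ring
    generalize (N:ℂ) = M at *
    generalize (q:ℂ) = x at *
    field_simp
    subst hN'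
    ring
    
lemma hasSum_G (N : ℤ) (hN : N ≠ 0) :
    HasSum (fun q : ℤ => (-1:ℂ)^q * (((q:ℂ)^3)⁻¹ * (((N:ℂ)-q)^3)⁻¹) *
      ∑' r : ℤ, (-1:ℂ) ^ r * (((r:ℂ)^3)⁻¹ * (((N:ℂ)-r)^3)⁻¹ * (((q:ℂ)-r)^2)⁻¹))
     (-(6 * (N:ℂ)^2 * Tv 1 N 8 8 - 21 * Tv 1 N 7 7 - Zv (-1) 2 * Tv 1 N 6 6
       + (10 / (N:ℂ)^6 * Tv (-1) N 5 3 + 12/(N:ℂ)^5 * Tv (-1) N 6 3 + 9/(N:ℂ)^4 * Tv (-1) N 7 3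
         + 4/(N:ℂ)^3 * Tv (-1) N 8 3
         - Zv (-1) 2 * (3/(N:ℂ)^4 * Tv (-1) N 5 3 + 2/(N:ℂ)^3 * Tv (-1) N 6 3))
       + (-1:ℂ)^N * (10 / (N:ℂ)^6 * Tv (-1) N 3 5 + 12/(N:ℂ)^5 * Tv (-1) N 3 6
         + 9/(N:ℂ)^4 * Tv (-1) N 3 7 + 4/(N:ℂ)^3 * Tv (-1) N 3 8
         - Zv (-1) 2 * (3/(N:ℂ)^4 * Tv (-1) N 3 5 + 2/(N:ℂ)^3 * Tv (-1) N 3 6)))) := by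
  have hNc : (N:ℂ) ≠ 0 := by exact_mod_cast hN
  have e1 : (1:ℂ) * 1 = 1 := by norm_num
  have e2 : (-1:ℂ) * (-1) = 1 := by norm_num
  have t88 := (hasSum_tau e1 N hN 8 8 (by norm_num) (by norm_num) (by norm_num)).mul_left (6 * (N:ℂ)^2)
  have t77 := (hasSum_tau e1 N hN 7 7 (by norm_num) (by norm_num) (by norm_num)).mul_left 21
  have t66 := (hasSum_tau e1 N hN 6 6 (by norm_num) (by norm_num) (by norm_num)).mul_left (Zv (-1) 2)
  have t5 := hasSum_tau e2 N hN 5 3 (by norm_num) (by norm_num) (by norm_num)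
  have t6 := hasSum_tau e2 N hN 6 3 (by norm_num) (by norm_num) (by norm_num)
  have t7 := hasSum_tau e2 N hN 7 3 (by norm_num) (by norm_num) (by norm_num)
  have t8 := hasSum_tau e2 N hN 8 3 (by norm_num) (by norm_num) (by norm_num)
  have u5 := hasSum_tau e2 N hN 3 5 (by norm_num) (by norm_num) (by norm_num)
  have u6 := hasSum_tau e2 N hN 3 6 (by norm_num) (by norm_num) (by norm_num)
  have u7 := hasSum_tau e2 N hN 3 7 (by norm_num) (by norm_num) (by norm_num)
  have u8 := hasSum_tau e2 N hN 3 8 (by norm_num) (by norm_num) (by norm_num)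
  have A1 := (t88.sub t77).sub t66
  have A2 := ((((t5.mul_left (10 / (N:ℂ)^6)).add (t6.mul_left (12 / (N:ℂ)^5))).add
    (t7.mul_left (9 / (N:ℂ)^4))).add (t8.mul_left (4 / (N:ℂ)^3))).sub
    (((t5.mul_left (3/(N:ℂ)^4)).add (t6.mul_left (2/(N:ℂ)^3))).mul_left (Zv (-1) 2))
  have A3 := (((((u5.mul_left (10 / (N:ℂ)^6)).add (u6.mul_left (12 / (N:ℂ)^5))).add
    (u7.mul_left (9 / (N:ℂ)^4))).add (u8.mul_left (4 / (N:ℂ)^3))).sub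
    (((u5.mul_left (3/(N:ℂ)^4)).add (u6.mul_left (2/(N:ℂ)^3))).mul_left (Zv (-1) 2))).mul_left ((-1:ℂ)^N)
  refine hs_of ((A1.add A2).add A3).neg ?_ rfl
  funext q
  by_cases h0 : q = 0
  · simp [h0, tau]
  by_cases h1 : q = N
  · simp [h1, tau]
  have hqc : (q:ℂ) ≠ 0 := by exact_mod_cast h0
  have hpc : (N:ℂ) - q ≠ 0 := by rw [sub_ne_zero]; exact_mod_cast (Ne.symm h1)
  rw [(hasSum_H e2 N q hN h0 h1).tsum_eq]
  simp only [tau, h0, h1, or_self, if_false, one_zpow, R0]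
  have hs := e_sq e2 q
  generalize (-1:ℂ)^q = s at *
  generalize (-1:ℂ)^N = w at *
  generalize Zv (-1) 2 = z at *
  generalize (N:ℂ) - q = p at *
  generalize (q:ℂ) = x at *
  generalize (N:ℂ) = M at *
  field_simp
  have hs2 : s^2 = 1 := by rw [sq, hs]
  ring_nf
  simp only [hs2]
  ring


lemma hasSum_alt (k : ℕ) (hk : 1 ≤ k) (S : ℂ) (h : HasSum (fun n : ℕ => ((n:ℂ)^k)⁻¹) S) :
    HasSum (fun n : ℕ => (-1:ℂ)^n * ((n:ℂ)^k)⁻¹) ((2/2^k - 1) * S) := by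
  have h1 : HasSum (fun n : ℕ => if Even n then ((n:ℂ)^k)⁻¹ else 0) (((2:ℂ)^k)⁻¹ * S) := by
    have hi : Function.Injective (fun n : ℕ => 2 * n) := fun a b h => by simpa using h
    rw [← hi.hasSum_iff]
    · refine hs_of (h.mul_left (((2:ℂ)^k)⁻¹)) ?_ rfl
      funext n
      simp [mul_pow]
      ring
    · intro x hx
      rw [if_neg]
      intro hx'
      obtain ⟨y, hy⟩ := hx'
      exact hx ⟨y, by simp only; omega⟩
  refine hs_of ((h1.mul_left 2).sub h) ?_ (by ring)
  funext n
  by_cases hn : Even n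
  · simp [hn]; ring
  · simp [hn, (Nat.not_even_iff_odd.1 hn).neg_one_pow]

lemma Zv_eq {e : ℂ} (he : e * e = 1) (k : ℕ) (hk : Even k) (hk1 : 1 ≤ k) (S : ℂ)
    (h : HasSum (fun n : ℕ => e^n * ((n:ℂ)^k)⁻¹) S) : Zv e k = 2 * S := by
  have := HasSum.of_nat_of_neg (f := fun q : ℤ => e ^ q * ((q : ℂ) ^ k)⁻¹) (g := S) (g' := S)
    (hs_of h (by funext n; simp) rfl) (hs_of h (by funext n; rw [e_neg he]; simp [hk.neg_pow]) rfl)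
  rw [Zv, this.tsum_eq]
  simp [show k ≠ 0 by omega]
  ring

lemma hasSum_even (k : ℕ) (hk : k ≠ 0) (v : ℝ)
    (hv : (-1) ^ (k + 1) * 2 ^ (2 * k - 1) * Real.pi ^ (2 * k) * ↑(bernoulli (2 * k)) / ↑(2 * k).factorial = v) :
    HasSum (fun n : ℕ => ((n:ℂ)^(2*k))⁻¹) (v : ℂ) := by
  have h := hasSum_zeta_nat hk
  rw [hv] at h
  refine hs_of (Complex.hasSum_ofReal.2 h) ?_ rfl
  funext n
  push_cast
  simp

lemma b2 : bernoulli 2 = 1/6 := by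
  rw [bernoulli_eq_bernoulli'_of_ne_one (by decide), bernoulli'_two]
lemma b4 : bernoulli 4 = -1/30 := by
  rw [bernoulli_eq_bernoulli'_of_ne_one (by decide), bernoulli'_four]
lemma b5' : bernoulli' 5 = 0 := bernoulli'_eq_zero_of_odd (by decide) (by norm_num)
lemma b6' : bernoulli' 6 = 1/42 := by
  rw [bernoulli'_def]
  norm_num [Finset.sum_range_succ, b5', Nat.choose]
lemma b7' : bernoulli' 7 = 0 := bernoulli'_eq_zero_of_odd (by decide) (by norm_num)
lemma b8' : bernoulli' 8 = -1/30 := by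
  rw [bernoulli'_def]
  norm_num [Finset.sum_range_succ, b5', b6', b7', Nat.choose]
lemma b6 : bernoulli 6 = 1/42 := by
  rw [bernoulli_eq_bernoulli'_of_ne_one (by decide), b6']
lemma b8 : bernoulli 8 = -1/30 := by
  rw [bernoulli_eq_bernoulli'_of_ne_one (by decide), b8']

lemma z2 : HasSum (fun n : ℕ => ((n:ℂ)^2)⁻¹) ((π:ℂ)^2/6) := by
  refine hs_of (hasSum_even 1 (by norm_num) (π^2/6) ?_) rfl (by push_cast; rfl)
  norm_num [b2, Nat.factorial]; ring
lemma z4 : HasSum (fun n : ℕ => ((n:ℂ)^4)⁻¹) ((π:ℂ)^4/90) := by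
  refine hs_of (hasSum_even 2 (by norm_num) (π^4/90) ?_) rfl (by push_cast; rfl)
  norm_num [b4, Nat.factorial]; ring
lemma z6 : HasSum (fun n : ℕ => ((n:ℂ)^6)⁻¹) ((π:ℂ)^6/945) := by
  refine hs_of (hasSum_even 3 (by norm_num) (π^6/945) ?_) rfl (by push_cast; rfl)
  norm_num [b6, Nat.factorial]; ring
lemma z8 : HasSum (fun n : ℕ => ((n:ℂ)^8)⁻¹) ((π:ℂ)^8/9450) := by
  refine hs_of (hasSum_even 4 (by norm_num) (π^8/9450) ?_) rfl (by push_cast; rfl)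
  norm_num [b8, Nat.factorial]; ring

lemma Zp (k : ℕ) (hk : Even k) (hk1 : 1 ≤ k) (S : ℂ) (h : HasSum (fun n : ℕ => ((n:ℂ)^k)⁻¹) S) :
    Zv 1 k = 2 * S := Zv_eq (by norm_num) k hk hk1 S (hs_of h (by simp) rfl)
lemma Zm (k : ℕ) (hk : Even k) (hk1 : 1 ≤ k) (S : ℂ) (h : HasSum (fun n : ℕ => ((n:ℂ)^k)⁻¹) S) :
    Zv (-1) k = 2 * ((2/2^k - 1) * S) := Zv_eq (by norm_num) k hk hk1 _ (hasSum_alt k hk1 S h)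

lemma hasSum_zeta (k : ℕ) (hk : 1 < k) : HasSum (fun n : ℕ => ((n:ℂ)^k)⁻¹) (riemannZeta k) := by
  rw [zeta_nat_eq_tsum_of_gt_one hk]
  have : Summable (fun n : ℕ => 1 / (n:ℂ)^k) := by
    refine Summable.of_norm_bounded ((Real.summable_one_div_nat_pow (p := k).2 hk)) ?_
    intro n; simp
  exact hs_of this.hasSum (by simp) rfl

lemma hasSum_fin (k : ℕ) (hk : 1 < k) (A B : ℂ) :
    HasSum (fun n : ℕ => (A + B * (-1:ℂ)^((n:ℤ)+1)) * ((((n:ℤ)+1:ℤ):ℂ)^k)⁻¹)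
      ((A + B * (2/2^k - 1)) * riemannZeta k) := by
  have h := hasSum_zeta k hk
  have h2 := (h.mul_left A).add ((hasSum_alt k hk.le _ h).mul_left B)
  have h3 := (hasSum_nat_add_iff (f := fun n : ℕ => A * ((n:ℂ)^k)⁻¹ + B * ((-1:ℂ)^n * ((n:ℂ)^k)⁻¹)) 1
    (g := (A + B * (2/2^k - 1)) * riemannZeta k)).2
      (hs_of h2 rfl (by simp [show k ≠ 0 by omega]; ring))
  refine hs_of h3 ?_ rfl
  funext n
  have : (-1:ℂ)^((n:ℤ)+1) = (-1)^(n+1) := by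
    rw [← zpow_natCast]; push_cast; rfl
  rw [this]
  push_cast
  ring



lemma Tgen {e : ℂ} (he : e * e = 1) (N : ℤ) (a b : ℕ) (c2 c4 c6 c8 d c2' c4' c6' c8' d' : ℕ)
    (h2 : cc a b 2 = c2) (h4 : cc a b 4 = c4) (h6 : cc a b 6 = c6) (h8 : cc a b 8 = c8)
    (h : dd a b = d) (h2' : cc b a 2 = c2') (h4' : cc b a 4 = c4') (h6' : cc b a 6 = c6')
    (h8' : cc b a 8 = c8') (h' : dd b a = d') :
    Tv e N a b = ((N : ℂ) ^ (a+b))⁻¹ *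
      (c2 * (Zv e 2 * (N:ℂ)^2) + c4 * (Zv e 4 * (N:ℂ)^4) + c6 * (Zv e 6 * (N:ℂ)^6)
        + c8 * (Zv e 8 * (N:ℂ)^8)
        + e ^ N * (c2' * (Zv e 2 * (N:ℂ)^2) + c4' * (Zv e 4 * (N:ℂ)^4) + c6' * (Zv e 6 * (N:ℂ)^6)
        + c8' * (Zv e 8 * (N:ℂ)^8)) - d - e ^ N * d') := by
  have o3 : Zv e 3 = 0 := Z_odd he 3 (by decide)
  have o5 : Zv e 5 = 0 := Z_odd he 5 (by decide)
  have o7 : Zv e 7 = 0 := Z_odd he 7 (by decide)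
  subst h2 h4 h6 h8 h h2' h4' h6' h8' h'
  simp [Tv, Finset.sum_range_succ, Zt, o3, o5, o7]

lemma tp88 (N : ℤ) : Tv 1 N 8 8 = ((N : ℂ) ^ (8+8))⁻¹ * ((1716:ℕ) * (Zv 1 2 * (N:ℂ)^2) + (330:ℕ) * (Zv 1 4 * (N:ℂ)^4) + (36:ℕ) * (Zv 1 6 * (N:ℂ)^6)
    + (1:ℕ) * (Zv 1 8 * (N:ℂ)^8) + 1 ^ N * ((1716:ℕ) * (Zv 1 2 * (N:ℂ)^2) + (330:ℕ) * (Zv 1 4 * (N:ℂ)^4) + (36:ℕ) * (Zv 1 6 * (N:ℂ)^6)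
    + (1:ℕ) * (Zv 1 8 * (N:ℂ)^8)) - (6435:ℕ) - 1 ^ N * (6435:ℕ)) := by
  apply Tgen <;> first | simp [cc] | simp [dd]
lemma tp77 (N : ℤ) : Tv 1 N 7 7 = ((N : ℂ) ^ (7+7))⁻¹ * ((462:ℕ) * (Zv 1 2 * (N:ℂ)^2) + (84:ℕ) * (Zv 1 4 * (N:ℂ)^4) + (7:ℕ) * (Zv 1 6 * (N:ℂ)^6)
    + (0:ℕ) * (Zv 1 8 * (N:ℂ)^8) + 1 ^ N * ((462:ℕ) * (Zv 1 2 * (N:ℂ)^2) + (84:ℕ) * (Zv 1 4 * (N:ℂ)^4) + (7:ℕ) * (Zv 1 6 * (N:ℂ)^6)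
    + (0:ℕ) * (Zv 1 8 * (N:ℂ)^8)) - (1716:ℕ) - 1 ^ N * (1716:ℕ)) := by
  apply Tgen <;> first | simp [cc] | simp [dd]
lemma tp66 (N : ℤ) : Tv 1 N 6 6 = ((N : ℂ) ^ (6+6))⁻¹ * ((126:ℕ) * (Zv 1 2 * (N:ℂ)^2) + (21:ℕ) * (Zv 1 4 * (N:ℂ)^4) + (1:ℕ) * (Zv 1 6 * (N:ℂ)^6)
    + (0:ℕ) * (Zv 1 8 * (N:ℂ)^8) + 1 ^ N * ((126:ℕ) * (Zv 1 2 * (N:ℂ)^2) + (21:ℕ) * (Zv 1 4 * (N:ℂ)^4) + (1:ℕ) * (Zv 1 6 * (N:ℂ)^6)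
    + (0:ℕ) * (Zv 1 8 * (N:ℂ)^8)) - (462:ℕ) - 1 ^ N * (462:ℕ)) := by
  apply Tgen <;> first | simp [cc] | simp [dd]
lemma tm53 (N : ℤ) : Tv (-1) N 5 3 = ((N : ℂ) ^ (5+3))⁻¹ * ((10:ℕ) * (Zv (-1) 2 * (N:ℂ)^2) + (3:ℕ) * (Zv (-1) 4 * (N:ℂ)^4) + (0:ℕ) * (Zv (-1) 6 * (N:ℂ)^6)
    + (0:ℕ) * (Zv (-1) 8 * (N:ℂ)^8) + (-1) ^ N * ((5:ℕ) * (Zv (-1) 2 * (N:ℂ)^2) + (0:ℕ) * (Zv (-1) 4 * (N:ℂ)^4) + (0:ℕ) * (Zv (-1) 6 * (N:ℂ)^6)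
    + (0:ℕ) * (Zv (-1) 8 * (N:ℂ)^8)) - (21:ℕ) - (-1) ^ N * (35:ℕ)) := by
  apply Tgen <;> first | simp [cc] | simp [dd]
lemma tm63 (N : ℤ) : Tv (-1) N 6 3 = ((N : ℂ) ^ (6+3))⁻¹ * ((15:ℕ) * (Zv (-1) 2 * (N:ℂ)^2) + (6:ℕ) * (Zv (-1) 4 * (N:ℂ)^4) + (1:ℕ) * (Zv (-1) 6 * (N:ℂ)^6)
    + (0:ℕ) * (Zv (-1) 8 * (N:ℂ)^8) + (-1) ^ N * ((6:ℕ) * (Zv (-1) 2 * (N:ℂ)^2) + (0:ℕ) * (Zv (-1) 4 * (N:ℂ)^4) + (0:ℕ) * (Zv (-1) 6 * (N:ℂ)^6)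
    + (0:ℕ) * (Zv (-1) 8 * (N:ℂ)^8)) - (28:ℕ) - (-1) ^ N * (56:ℕ)) := by
  apply Tgen <;> first | simp [cc] | simp [dd]
lemma tm73 (N : ℤ) : Tv (-1) N 7 3 = ((N : ℂ) ^ (7+3))⁻¹ * ((21:ℕ) * (Zv (-1) 2 * (N:ℂ)^2) + (10:ℕ) * (Zv (-1) 4 * (N:ℂ)^4) + (3:ℕ) * (Zv (-1) 6 * (N:ℂ)^6)
    + (0:ℕ) * (Zv (-1) 8 * (N:ℂ)^8) + (-1) ^ N * ((7:ℕ) * (Zv (-1) 2 * (N:ℂ)^2) + (0:ℕ) * (Zv (-1) 4 * (N:ℂ)^4) + (0:ℕ) * (Zv (-1) 6 * (N:ℂ)^6)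
    + (0:ℕ) * (Zv (-1) 8 * (N:ℂ)^8)) - (36:ℕ) - (-1) ^ N * (84:ℕ)) := by
  apply Tgen <;> first | simp [cc] | simp [dd]
lemma tm83 (N : ℤ) : Tv (-1) N 8 3 = ((N : ℂ) ^ (8+3))⁻¹ * ((28:ℕ) * (Zv (-1) 2 * (N:ℂ)^2) + (15:ℕ) * (Zv (-1) 4 * (N:ℂ)^4) + (6:ℕ) * (Zv (-1) 6 * (N:ℂ)^6)
    + (1:ℕ) * (Zv (-1) 8 * (N:ℂ)^8) + (-1) ^ N * ((8:ℕ) * (Zv (-1) 2 * (N:ℂ)^2) + (0:ℕ) * (Zv (-1) 4 * (N:ℂ)^4) + (0:ℕ) * (Zv (-1) 6 * (N:ℂ)^6)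
    + (0:ℕ) * (Zv (-1) 8 * (N:ℂ)^8)) - (45:ℕ) - (-1) ^ N * (120:ℕ)) := by
  apply Tgen <;> first | simp [cc] | simp [dd]
lemma tm35 (N : ℤ) : Tv (-1) N 3 5 = ((N : ℂ) ^ (3+5))⁻¹ * ((5:ℕ) * (Zv (-1) 2 * (N:ℂ)^2) + (0:ℕ) * (Zv (-1) 4 * (N:ℂ)^4) + (0:ℕ) * (Zv (-1) 6 * (N:ℂ)^6)
    + (0:ℕ) * (Zv (-1) 8 * (N:ℂ)^8) + (-1) ^ N * ((10:ℕ) * (Zv (-1) 2 * (N:ℂ)^2) + (3:ℕ) * (Zv (-1) 4 * (N:ℂ)^4) + (0:ℕ) * (Zv (-1) 6 * (N:ℂ)^6)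
    + (0:ℕ) * (Zv (-1) 8 * (N:ℂ)^8)) - (35:ℕ) - (-1) ^ N * (21:ℕ)) := by
  apply Tgen <;> first | simp [cc] | simp [dd]
lemma tm36 (N : ℤ) : Tv (-1) N 3 6 = ((N : ℂ) ^ (3+6))⁻¹ * ((6:ℕ) * (Zv (-1) 2 * (N:ℂ)^2) + (0:ℕ) * (Zv (-1) 4 * (N:ℂ)^4) + (0:ℕ) * (Zv (-1) 6 * (N:ℂ)^6)
    + (0:ℕ) * (Zv (-1) 8 * (N:ℂ)^8) + (-1) ^ N * ((15:ℕ) * (Zv (-1) 2 * (N:ℂ)^2) + (6:ℕ) * (Zv (-1) 4 * (N:ℂ)^4) + (1:ℕ) * (Zv (-1) 6 * (N:ℂ)^6)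
    + (0:ℕ) * (Zv (-1) 8 * (N:ℂ)^8)) - (56:ℕ) - (-1) ^ N * (28:ℕ)) := by
  apply Tgen <;> first | simp [cc] | simp [dd]
lemma tm37 (N : ℤ) : Tv (-1) N 3 7 = ((N : ℂ) ^ (3+7))⁻¹ * ((7:ℕ) * (Zv (-1) 2 * (N:ℂ)^2) + (0:ℕ) * (Zv (-1) 4 * (N:ℂ)^4) + (0:ℕ) * (Zv (-1) 6 * (N:ℂ)^6)
    + (0:ℕ) * (Zv (-1) 8 * (N:ℂ)^8) + (-1) ^ N * ((21:ℕ) * (Zv (-1) 2 * (N:ℂ)^2) + (10:ℕ) * (Zv (-1) 4 * (N:ℂ)^4) + (3:ℕ) * (Zv (-1) 6 * (N:ℂ)^6)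
    + (0:ℕ) * (Zv (-1) 8 * (N:ℂ)^8)) - (84:ℕ) - (-1) ^ N * (36:ℕ)) := by
  apply Tgen <;> first | simp [cc] | simp [dd]
lemma tm38 (N : ℤ) : Tv (-1) N 3 8 = ((N : ℂ) ^ (3+8))⁻¹ * ((8:ℕ) * (Zv (-1) 2 * (N:ℂ)^2) + (0:ℕ) * (Zv (-1) 4 * (N:ℂ)^4) + (0:ℕ) * (Zv (-1) 6 * (N:ℂ)^6)
    + (0:ℕ) * (Zv (-1) 8 * (N:ℂ)^8) + (-1) ^ N * ((28:ℕ) * (Zv (-1) 2 * (N:ℂ)^2) + (15:ℕ) * (Zv (-1) 4 * (N:ℂ)^4) + (6:ℕ) * (Zv (-1) 6 * (N:ℂ)^6)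
    + (1:ℕ) * (Zv (-1) 8 * (N:ℂ)^8)) - (120:ℕ) - (-1) ^ N * (45:ℕ)) := by
  apply Tgen <;> first | simp [cc] | simp [dd]

noncomputable def GG (N : ℤ) : ℂ := (-(6*N^2*Tv 1 N 8 8 - 21*Tv 1 N 7 7 - Zv (-1) 2*Tv 1 N 6 6 + (10/N^6*Tv (-1) N 5 3 + 12/N^5*Tv (-1) N 6 3 + 9/N^4*Tv (-1) N 7 3 + 4/N^3*Tv (-1) N 8 3 - Zv (-1) 2*(3/N^4*Tv (-1) N 5 3 + 2/N^3*Tv (-1) N 6 3)) + (-1)^N*(10/N^6*Tv (-1) N 3 5 + 12/N^5*Tv (-1) N 3 6 + 9/N^4*Tv (-1) N 3 7 + 4/N^3*Tv (-1) N 3 8 - Zv (-1) 2*(3/N^4*Tv (-1) N 3 5 + 2/N^3*Tv (-1) N 3 6))))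

lemma GG_eval (N : ℤ) (hN : N ≠ 0) : (-1:ℂ)^N * ((N:ℂ)^3)⁻¹ * GG N =
    (4516 + 7248 * (-1:ℂ)^N) * ((N:ℂ)^17)⁻¹ + ((π:ℂ)^2*(434/3) + (π:ℂ)^2*(-26/3) * (-1:ℂ)^N) * ((N:ℂ)^15)⁻¹
    + ((π:ℂ)^4*(3/2) + (π:ℂ)^4*(-157/15) * (-1:ℂ)^N) * ((N:ℂ)^13)⁻¹
    + (0 + (π:ℂ)^6*(-67/1260) * (-1:ℂ)^N) * ((N:ℂ)^11)⁻¹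
    + (0 + (π:ℂ)^8*(-1/5040) * (-1:ℂ)^N) * ((N:ℂ)^9)⁻¹ := by
  have hNc : (N:ℂ) ≠ 0 := by exact_mod_cast hN
  have hw : (-1:ℂ)^N * (-1:ℂ)^N = 1 := by
    rw [← mul_zpow]; simp
  rw [GG, tp88 N, tp77 N, tp66 N, tm53 N, tm63 N, tm73 N, tm83 N, tm35 N, tm36 N, tm37 N, tm38 N,
    Zp 2 (by decide) (by norm_num) _ z2, Zp 4 (by decide) (by norm_num) _ z4,
    Zp 6 (by decide) (by norm_num) _ z6, Zp 8 (by decide) (by norm_num) _ z8,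
    Zm 2 (by decide) (by norm_num) _ z2, Zm 4 (by decide) (by norm_num) _ z4,
    Zm 6 (by decide) (by norm_num) _ z6, Zm 8 (by decide) (by norm_num) _ z8]
  rw [one_zpow]
  generalize (-1:ℂ)^N = w at *
  generalize (π:ℂ) = p
  generalize (N:ℂ) = x at *
  have hw3 : w^3 = w := by linear_combination w*hw
  have hw2 : w^2 = 1 := by linear_combination hw
  push_cast
  norm_num only
  field_simp
  ring_nf
  simp only [hw3, hw2]
  ring

lemma main_sum : ∑' x : ℕ × ℤ × ℤ, KF x =
    (4516 + 7248 * (2/2^17 - 1)) * riemannZeta (17:ℕ)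
    + ((π:ℂ)^2*(434/3) + (π:ℂ)^2*(-26/3) * (2/2^15 - 1)) * riemannZeta (15:ℕ)
    + ((π:ℂ)^4*(3/2) + (π:ℂ)^4*(-157/15) * (2/2^13 - 1)) * riemannZeta (13:ℕ)
    + (0 + (π:ℂ)^6*(-67/1260) * (2/2^11 - 1)) * riemannZeta (11:ℕ)
    + (0 + (π:ℂ)^8*(-1/5040) * (2/2^9 - 1)) * riemannZeta (9:ℕ) := by
  have key := ((((hasSum_fin 17 (by norm_num) 4516 7248).add
    (hasSum_fin 15 (by norm_num) ((π:ℂ)^2*(434/3)) ((π:ℂ)^2*(-26/3)))).add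
    (hasSum_fin 13 (by norm_num) ((π:ℂ)^4*(3/2)) ((π:ℂ)^4*(-157/15)))).add
    (hasSum_fin 11 (by norm_num) 0 ((π:ℂ)^6*(-67/1260)))).add
    (hasSum_fin 9 (by norm_num) 0 ((π:ℂ)^8*(-1/5040)))
  rw [← key.tsum_eq, summable_KF.tsum_prod]
  congr 1
  funext n
  have hN : (n:ℤ) + 1 ≠ 0 := by omega
  have h1 : Summable (fun y : ℤ × ℤ => KF (n, y)) := summable_KF.prod_factor n
  rw [h1.tsum_prod]
  refine Eq.trans ?_ (GG_eval ((n:ℤ)+1) hN)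
  have hG := ((hasSum_G ((n:ℤ)+1) hN).mul_left ((-1:ℂ)^((n:ℤ)+1) * ((((n:ℤ)+1:ℤ):ℂ)^3)⁻¹)).tsum_eq
  rw [GG, ← hG]
  congr 1
  funext q
  rw [← tsum_mul_left, ← tsum_mul_left]
  congr 1
  funext r
  have e1 : (-1:ℂ)^((n:ℤ)+1+q+r) = (-1:ℂ)^((n:ℤ)+1) * (-1:ℂ)^q * (-1:ℂ)^r := by
    rw [zpow_add₀ (by norm_num), zpow_add₀ (by norm_num)]
  simp only [KF, e1, div_eq_mul_inv, mul_inv]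
  push_cast
  ring

lemma final_val : ∑' t, KA t =
      (17 * (π : ℂ) ^ 8 / 344064) * riemannZeta 9 +
        (22847 * (π : ℂ) ^ 6 / 1720320) * riemannZeta 11 +
        (49005 * (π : ℂ) ^ 4 / 16384) * riemannZeta 13 +
        (3768307 * (π : ℂ) ^ 2 / 98304) * riemannZeta 15 -
        (11189819 / 16384) * riemannZeta 17 := by
  have h := full_sum
  rw [main_sum] at h
  push_cast at h
  linear_combination (-1/4) * h


/-- `ζ₃((2,3,3,3,3,3), λ₂∨; SU(4))` evaluated in terms of Riemann zeta values
(Example 5.4 of Komori–Matsumoto–Tsumura). -/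
theorem SU4_lam2_value_233333 :
    (∑' t : ℕ × ℕ × ℕ,
        (-1 : ℂ) ^ ((t.1 + 1) + (t.2.2 + 1)) /
          (((t.1 + 1 : ℕ) : ℂ) ^ 2 * ((t.2.1 + 1 : ℕ) : ℂ) ^ 3 *
            ((t.2.2 + 1 : ℕ) : ℂ) ^ 3 * ((t.1 + 1 + (t.2.1 + 1) : ℕ) : ℂ) ^ 3 *
            ((t.2.1 + 1 + (t.2.2 + 1) : ℕ) : ℂ) ^ 3 *
            ((t.1 + 1 + (t.2.1 + 1) + (t.2.2 + 1) : ℕ) : ℂ) ^ 3)) =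
      (17 * (π : ℂ) ^ 8 / 344064) * riemannZeta 9 +
        (22847 * (π : ℂ) ^ 6 / 1720320) * riemannZeta 11 +
        (49005 * (π : ℂ) ^ 4 / 16384) * riemannZeta 13 +
        (3768307 * (π : ℂ) ^ 2 / 98304) * riemannZeta 15 -
        (11189819 / 16384) * riemannZeta 17 := by
  exact final_val
end
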